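/- arXiv:2503.04699 — 9 statements merged into one kernel-verified Lean document; each statement's English description precedes it below -/
import Mathlib

section
/- Let α, β be natural numbers and a, b integers such that it is not the case that α = 0, β = 0, a = 1 and b = 1. Let f = 1 + x + x^{-α} y^{b} and g = 1 + y + y^{-β} x^{a} in R, and consider the module maps h_X : R → R × R, u ↦ (f·u, g·u), and h_Z† : R × R → R, (u, v) ↦ g·u + f·v. Then the BB-code chain complex is exact at the middle term: LinearMap.ker h_Z† = LinearMap.range h_X. (That is, every bivariate-bicycle code with toric layout is topological, except the single pathological case (ᾱ, β̄, a, b) = (0, 0, 1, 1).) -/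
noncomputable section

/-- The Laurent polynomial ring `F₂[x^±, y^±]` as a group algebra. -/
abbrev LaurentR : Type := AddMonoidAlgebra (ZMod 2) (ℤ × ℤ)

/-- The monomial `x^i y^j`. -/
def mono (i j : ℤ) : LaurentR := AddMonoidAlgebra.single (i, j) 1

/-- The BB check map `h_X : R → R × R`, `u ↦ (f·u, g·u)`. -/
def hX (f g : LaurentR) : LaurentR →ₗ[LaurentR] LaurentR × LaurentR :=
  (LinearMap.mulLeft LaurentR f).prod (LinearMap.mulLeft LaurentR g)

/-- The BB check map `h_Z† : R × R → R`, `(u, v) ↦ g·u + f·v`. -/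
def hZdag (f g : LaurentR) : LaurentR × LaurentR →ₗ[LaurentR] LaurentR :=
  (LinearMap.mulLeft LaurentR g).coprod (LinearMap.mulLeft LaurentR f)

/-!
Exactness in the middle says that `f` and `g` have no common factor, since the two-variable Laurent
polynomials form a unique factorization domain. Write `f = 1 + x + x ^ k * y ^ b` and
`g = 1 + y + x ^ a * y ^ l`. If `b ≠ 0`, then `f` is, up to a unit, an Eisenstein polynomial in `y`
or `y⁻¹` at the prime `1 + x`, so it is prime; likewise `g` is prime if `a ≠ 0`. In this case a
common factor makes `f` and `g` associated, and as all units are monomials, their supports are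
translates of each other, which happens only in the pathological cases. If `a = 0`, then `g` does
not involve `x`, whereas `f`, as a polynomial in `x`, has a coefficient equal to `1`; the case
`b = 0` is symmetric.
-/

section Monomials

open AddMonoidAlgebra

lemma card_support_mul_card_support_le_one_of_mul_eq_single {R M : Type*} [Semiring R]
    [NoZeroDivisors R] [Add M] [TwoUniqueSums M] {p q : AddMonoidAlgebra R M} {m : M} {r : R}
    (h : p * q = single m r) : p.coeff.support.card * q.coeff.support.card ≤ 1 := by
  by_contra! hlt
  have eq_of_uniqueAdd {k l : M} (hk : k ∈ p.coeff.support) (hl : l ∈ q.coeff.support)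
      (hkl : UniqueAdd p.coeff.support q.coeff.support k l) : m = k + l := by
    by_contra hne
    have hcoeff := coeff_mul_add_of_uniqueAdd hkl
    rw [h, coeff_single, Finsupp.single_eq_of_ne' hne] at hcoeff
    exact mul_ne_zero (Finsupp.mem_support_iff.mp hk) (Finsupp.mem_support_iff.mp hl) hcoeff.symm
  obtain ⟨⟨k, l⟩, hkl, ⟨k', l'⟩, hkl', hne, hu, hu'⟩ :=
    TwoUniqueSums.uniqueAdd_of_one_lt_card hlt
  rw [Finset.mem_product] at hkl hkl'
  have hsum : k' + l' = k + l :=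
    (eq_of_uniqueAdd hkl'.1 hkl'.2 hu').symm.trans (eq_of_uniqueAdd hkl.1 hkl.2 hu)
  obtain ⟨rfl, rfl⟩ := hu hkl'.1 hkl'.2 hsum
  exact hne rfl

lemma exists_eq_single_of_dvd_single {R M : Type*} [Semiring R] [NoZeroDivisors R]
    [AddMonoid M] [TwoUniqueSums M] {p : AddMonoidAlgebra R M} {m : M} {r : R} (hr : r ≠ 0)
    (h : p ∣ single m r) : ∃ k s, p = single k s := by
  obtain ⟨q, hpq⟩ := h
  have hq : q ≠ 0 := right_ne_zero_of_mul (hpq ▸ single_ne_zero.mpr hr)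
  have hq_card : 0 < q.coeff.support.card := by
    simpa [Finset.card_pos, Finsupp.support_nonempty_iff] using hq
  have hp_card : p.coeff.support.card ≤ 1 :=
    (Nat.le_mul_of_pos_right _ hq_card).trans
      (card_support_mul_card_support_le_one_of_mul_eq_single hpq.symm)
  obtain ⟨k, s, hp⟩ := Finsupp.card_support_le_one'.mp hp_card
  exact ⟨k, s, coeff_injective hp⟩

lemma isRelPrime_single_of_isUnit_coeff {R M : Type*} [CommSemiring R] [NoZeroDivisors R]
    [AddCommGroup M] [TwoUniqueSums M] {p : AddMonoidAlgebra R M} {n : M}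
    (hp : IsUnit (p.coeff n)) (m : M) {r : R} (hr : r ≠ 0) : IsRelPrime p (single m r) := by
  intro d hdp hdm
  obtain ⟨k, s, rfl⟩ := exists_eq_single_of_dvd_single hr hdm
  obtain ⟨q, rfl⟩ := hdp
  rw [coeff_single_mul_apply] at hp
  have hs : IsUnit s := isUnit_of_mul_isUnit_left hp
  refine IsUnit.of_mul_eq_one (single (-k) ↑hs.unit⁻¹) ?_
  simp [single_mul_single, one_def]

lemma exists_support_eq_map_add_of_associated {R M : Type*} [Semiring R] [Nontrivial R]
    [NoZeroDivisors R] [AddGroup M] [TwoUniqueSums M] {p q : AddMonoidAlgebra R M}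
    (h : Associated p q) :
    ∃ m, q.coeff.support = p.coeff.support.map (addRightEmbedding m) := by
  obtain ⟨u, rfl⟩ := h
  obtain ⟨m, s, hu⟩ :=
    exists_eq_single_of_dvd_single one_ne_zero (u.isUnit.dvd (a := single 0 1))
  have hs : s ≠ 0 := by
    rintro rfl
    exact u.ne_zero (hu.trans (single_zero m))
  exact ⟨m, by rw [hu, support_coeff_mul_single _ _ fun _ ↦ mul_eq_zero_iff_right hs]⟩

end Monomials

section Eisenstein

open LaurentPolynomial
open scoped Polynomial

variable {A : Type*} [CommRing A] [IsDomain A]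

lemma irreducible_X_pow_add_C_of_prime {π c : A} (hπ : Prime π) (hdvd : π ∣ c)
    (hsq : ¬π ^ 2 ∣ c) {n : ℕ} (hn : n ≠ 0) :
    Irreducible (Polynomial.X ^ n + Polynomial.C c) := by
  have hmonic : (Polynomial.X ^ n + Polynomial.C c).Monic := Polynomial.monic_X_pow_add_C c hn
  have hprime : (Ideal.span {π}).IsPrime := (Ideal.span_singleton_prime hπ.ne_zero).mpr hπ
  refine (hmonic.isEisensteinAt_of_mem_of_notMem hprime.ne_top ?_ ?_).irreducible hprime
    hmonic.isPrimitive ?_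
  · intro i hi
    rw [Polynomial.natDegree_X_pow_add_C] at hi
    rw [Polynomial.coeff_add, Polynomial.coeff_X_pow, if_neg hi.ne, zero_add,
      Polynomial.coeff_C, Ideal.mem_span_singleton]
    split_ifs
    · exact hdvd
    · exact dvd_zero π
  · simpa [Ideal.span_singleton_pow, Ideal.mem_span_singleton, hn.symm] using hsq
  · rw [Polynomial.natDegree_X_pow_add_C]
    exact Nat.pos_of_ne_zero hn

lemma prime_toLaurent {p : A[X]} (hp : Prime p) (h0 : p.coeff 0 ≠ 0) :
    Prime p.toLaurent := by
  refine (IsLocalization.toLocalizationMap (.powers Polynomial.X) A[T;T⁻¹]).map_prime hp ?_ ?_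
  · exact Polynomial.toLaurent_ne_zero.mpr hp.ne_zero
  · intro hunit
    obtain ⟨n, hn⟩ := (IsLocalization.Away.algebraMap_isUnit_iff Polynomial.X).mp hunit
    have hX : Associated p Polynomial.X :=
      hp.associated_of_dvd Polynomial.prime_X (hp.dvd_of_dvd_pow hn)
    exact h0 (Polynomial.X_dvd_iff.mp hX.symm.dvd)

variable [UniqueFactorizationMonoid A]

instance : UniqueFactorizationMonoid A[T;T⁻¹] :=
  .of_isLocalization (.powers (Polynomial.X : A[X])) _

lemma prime_T_natCast_add_C {π c : A} (hπ : Prime π) (hdvd : π ∣ c) (hsq : ¬π ^ 2 ∣ c) {n : ℕ}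
    (hn : n ≠ 0) : Prime (T n + C c : A[T;T⁻¹]) := by
  have hc : c ≠ 0 := by
    rintro rfl
    exact hsq (dvd_zero _)
  have hprime := prime_toLaurent (irreducible_X_pow_add_C_of_prime hπ hdvd hsq hn).prime
    (by simpa [hn.symm] using hc)
  simpa using hprime

lemma prime_T_add_C {π c : A} (hπ : Prime π) (hdvd : π ∣ c) (hsq : ¬π ^ 2 ∣ c) {n : ℤ}
    (hn : n ≠ 0) : Prime (T n + C c : A[T;T⁻¹]) := by
  obtain ⟨k, rfl | rfl⟩ := n.eq_nat_or_neg
  · exact prime_T_natCast_add_C hπ hdvd hsq (by simpa using hn)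
  · rw [← MulEquiv.prime_iff (invert (R := A))]
    simpa using prime_T_natCast_add_C hπ hdvd hsq (n := k) (by simpa using hn)

end Eisenstein

section Trinomials

open AddMonoidAlgebra LaurentPolynomial

section Semiring

lemma exists_coeff_one_add_T_one_add_C_mul_T_eq_one {A : Type*} [Semiring A] (c : A) (k : ℤ) :
    ∃ i, (1 + T 1 + C c * T k : A[T;T⁻¹]).coeff i = 1 := by
  have hcoeff : (C c * T k : A[T;T⁻¹]).coeff = Finsupp.single k c := by
    rw [← single_eq_C_mul_T, coeff_single]
  simp only [← T_zero, coeff_add, Finsupp.add_apply, T_apply, hcoeff]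
  rcases eq_or_ne k 1 with rfl | hk
  · exact ⟨0, by simp⟩
  · exact ⟨1, by simp [hk]⟩

variable (K : Type*) [CommSemiring K]

/-- The Laurent polynomial `1 + y + x ^ m * y ^ n` in two variables, where `x` and `y` are the
monomials of exponents `(1, 0)` and `(0, 1)`; the polynomial `g` of a bivariate-bicycle code. -/
def trinomial (m n : ℤ) : AddMonoidAlgebra K (ℤ × ℤ) :=
  1 + single (0, 1) 1 + single (m, n) 1

/-- The automorphism of the two-variable Laurent polynomial ring exchanging `x` and `y`; it turns
a `trinomial` into the polynomial `f` of a bivariate-bicycle code. -/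
def swapVars : AddMonoidAlgebra K (ℤ × ℤ) ≃ₐ[K] AddMonoidAlgebra K (ℤ × ℤ) :=
  domCongr K K AddEquiv.prodComm

variable {K}

lemma swapVars_swapVars (p : AddMonoidAlgebra K (ℤ × ℤ)) : swapVars K (swapVars K p) = p := by
  induction p using AddMonoidAlgebra.induction_linear with
  | zero => simp
  | add p q hp hq => simp [hp, hq]
  | single m r => simp [swapVars, domCongr_single]

lemma swapVars_trinomial (m n : ℤ) :
    swapVars K (trinomial K m n) = 1 + single (1, 0) 1 + single (n, m) 1 := by
  simp [swapVars, trinomial, domCongr_single]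

lemma support_trinomial [Nontrivial K] {m : ℤ} (hm : m ≠ 0) (n : ℤ) :
    (trinomial K m n).coeff.support = {(0, 0), (0, 1), (m, n)} := by
  have h10 : (1 : K) ≠ 0 := one_ne_zero
  ext ⟨i, j⟩
  simp only [trinomial, one_def, Prod.zero_eq_mk, coeff_add, coeff_single,
    Finsupp.mem_support_iff, Finsupp.add_apply, Finsupp.single_apply, Finset.mem_insert,
    Finset.mem_singleton, Prod.mk.injEq]
  grind [add_zero, zero_add]

lemma support_swapVars_trinomial [Nontrivial K] {m : ℤ} (hm : m ≠ 0) (n : ℤ) :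
    (swapVars K (trinomial K m n)).coeff.support = {(0, 0), (1, 0), (n, m)} := by
  rw [swapVars, domCongr_support, support_trinomial hm]
  simp [Finset.map_insert]

lemma curryRingEquiv_trinomial (m n : ℤ) :
    curryRingEquiv (trinomial K m n) = C (1 + T 1) + C (T n) * T m := by
  simp only [trinomial, map_add, map_one, curryRingEquiv_single, single_eq_C_mul_T, T_zero,
    mul_one, one_mul]

lemma curryRingEquiv_swapVars_trinomial (m n : ℤ) :
    curryRingEquiv (swapVars K (trinomial K m n)) = 1 + T 1 + C (T m) * T n := by
  simp only [swapVars_trinomial, map_add, map_one, curryRingEquiv_single, single_eq_C_mul_T,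
    T_zero, mul_one, one_mul]

lemma isRelPrime_swapVars_trinomial_trinomial_zero [Nontrivial K] [NoZeroDivisors K]
    (b k l : ℤ) : IsRelPrime (swapVars K (trinomial K b k)) (trinomial K 0 l) := by
  obtain ⟨i, hi⟩ := exists_coeff_one_add_T_one_add_C_mul_T_eq_one (T b : K[T;T⁻¹]) k
  obtain ⟨j, hj⟩ := exists_coeff_one_add_T_one_add_C_mul_T_eq_one (1 : K) l
  have hf : IsUnit ((curryRingEquiv (swapVars K (trinomial K b k))).coeff i) := by
    rw [curryRingEquiv_swapVars_trinomial, hi]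
    exact isUnit_one
  have hg : curryRingEquiv (trinomial K 0 l) = single 0 (1 + T 1 + C 1 * T l) := by
    rw [curryRingEquiv_trinomial, T_zero, mul_one, ← map_add, map_one, one_mul]
    rfl
  have hne : (1 + T 1 + C 1 * T l : K[T;T⁻¹]) ≠ 0 := by
    intro h
    rw [h] at hj
    simp at hj
  refine IsRelPrime.of_map (curryRingEquiv (R := K) (M := ℤ) (N := ℤ)) ?_
  rw [hg]
  exact isRelPrime_single_of_isUnit_coeff hf 0 hne

lemma isRelPrime_swapVars_trinomial_zero_trinomial [Nontrivial K] [NoZeroDivisors K]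
    (k a l : ℤ) : IsRelPrime (swapVars K (trinomial K 0 k)) (trinomial K a l) := by
  refine IsRelPrime.of_map (swapVars K) ?_
  rw [swapVars_swapVars]
  exact (isRelPrime_swapVars_trinomial_trinomial_zero a l k).symm

lemma exponents_of_associated_swapVars_trinomial [Nontrivial K] [NoZeroDivisors K]
    {k l a b : ℤ} (ha : a ≠ 0) (hb : b ≠ 0)
    (h : Associated (swapVars K (trinomial K b k)) (trinomial K a l)) :
    (k = 0 ∧ a = 1 ∨ k = 1 ∧ a = -1) ∧ (l = 0 ∧ b = 1 ∨ l = 1 ∧ b = -1) := by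
  obtain ⟨⟨s, t⟩, hst⟩ := exists_support_eq_map_add_of_associated h
  rw [support_trinomial ha, support_swapVars_trinomial hb] at hst
  simp only [Finset.ext_iff, Finset.map_insert, Finset.map_singleton, Finset.mem_insert,
    Finset.mem_singleton, Prod.forall, addRightEmbedding_apply, Prod.mk_add_mk,
    Prod.mk.injEq] at hst
  have h_origin := hst 0 0
  have h_y := hst 0 1
  have h_xy := hst a l
  have h_origin' := hst s t
  have h_x' := hst (1 + s) t
  have h_xy' := hst (k + s) (b + t)
  omega

end Semiring

variable {K : Type*} [CommRing K] [IsDomain K]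

lemma prime_one_add_T_one : Prime (1 + T 1 : K[T;T⁻¹]) := by
  have h := prime_toLaurent (Polynomial.prime_X_sub_C (-1 : K)) (by simp)
  simpa [add_comm] using h

variable [UniqueFactorizationMonoid K]

instance : UniqueFactorizationMonoid (AddMonoidAlgebra K (ℤ × ℤ)) :=
  (curryRingEquiv (R := K) (M := ℤ) (N := ℤ)).symm.toMulEquiv.uniqueFactorizationMonoid
    inferInstance

lemma prime_trinomial {m : ℤ} (hm : m ≠ 0) (n : ℤ) : Prime (trinomial K m n) := by
  have hπ : Prime (1 + T 1 : K[T;T⁻¹]) := prime_one_add_T_one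
  have hsq : ¬(1 + T 1 : K[T;T⁻¹]) ^ 2 ∣ T (-n) * (1 + T 1) := by
    rw [(isUnit_T (-n)).dvd_mul_left]
    intro h
    have hle : 2 ≤ 1 := (pow_dvd_pow_iff hπ.ne_zero hπ.not_isUnit).mp (by rwa [pow_one])
    omega
  have hfactor : curryRingEquiv (trinomial K m n) =
      C (T n) * (T m + C (T (-n) * (1 + T 1)) : K[T;T⁻¹][T;T⁻¹]) := by
    rw [curryRingEquiv_trinomial, mul_add, ← map_mul, ← mul_assoc, ← T_add, add_neg_cancel,
      T_zero, one_mul, add_comm]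
  rw [← MulEquiv.prime_iff (curryRingEquiv (R := K) (M := ℤ) (N := ℤ)), hfactor,
    prime_isUnit_mul ((isUnit_T n).map C)]
  exact prime_T_add_C hπ (dvd_mul_left _ _) hsq hm

theorem isRelPrime_swapVars_trinomial {k l a b : ℤ}
    (h : ¬((k = 0 ∧ a = 1 ∨ k = 1 ∧ a = -1) ∧ (l = 0 ∧ b = 1 ∨ l = 1 ∧ b = -1))) :
    IsRelPrime (swapVars K (trinomial K b k)) (trinomial K a l) := by
  rcases eq_or_ne a 0 with rfl | ha
  · exact isRelPrime_swapVars_trinomial_trinomial_zero b k l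
  rcases eq_or_ne b 0 with rfl | hb
  · exact isRelPrime_swapVars_trinomial_zero_trinomial k a l
  have hf : Irreducible (swapVars K (trinomial K b k)) :=
    ((MulEquiv.prime_iff (swapVars K)).mpr (prime_trinomial hb k)).irreducible
  have hg : Irreducible (trinomial K a l) := (prime_trinomial ha l).irreducible
  rw [hf.isRelPrime_iff_not_dvd, hf.dvd_irreducible_iff_associated hg]
  exact fun hfg ↦ h (exponents_of_associated_swapVars_trinomial ha hb hfg)

end Trinomials

lemma mem_ker_hZdag {f g u v : LaurentR} :
    (u, v) ∈ LinearMap.ker (hZdag f g) ↔ g * u = f * v := by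
  have : CharP LaurentR 2 := charP_of_injective_algebraMap' (ZMod 2) 2
  rw [LinearMap.mem_ker]
  exact CharTwo.add_eq_zero

lemma mem_range_hX {f g u v : LaurentR} :
    (u, v) ∈ LinearMap.range (hX f g) ↔ ∃ w, f * w = u ∧ g * w = v := by
  simp [hX]

theorem ker_hZdag_eq_range_hX_of_isRelPrime {f g : LaurentR} (h : IsRelPrime f g) :
    LinearMap.ker (hZdag f g) = LinearMap.range (hX f g) := by
  ext ⟨u, v⟩
  rw [mem_ker_hZdag, mem_range_hX]
  constructor
  · intro huv
    rcases eq_or_ne f 0 with rfl | hf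
    · have hg : IsUnit g := isRelPrime_zero_left.mp h
      obtain ⟨w, rfl⟩ := hg.dvd (a := v)
      rw [zero_mul, hg.mul_right_eq_zero] at huv
      exact ⟨w, by rw [zero_mul, huv], rfl⟩
    · obtain ⟨w, rfl⟩ : f ∣ u := h.dvd_of_dvd_mul_left ⟨v, huv⟩
      exact ⟨w, rfl, mul_left_cancel₀ hf (by rw [← huv, mul_left_comm])⟩
  · rintro ⟨w, rfl, rfl⟩
    exact mul_left_comm g f w

theorem bb_code_topological_general {k l a b : ℤ}
    (h : ¬((k = 0 ∧ a = 1 ∨ k = 1 ∧ a = -1) ∧ (l = 0 ∧ b = 1 ∨ l = 1 ∧ b = -1))) :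
    LinearMap.ker (hZdag (1 + mono 1 0 + mono k b) (1 + mono 0 1 + mono a l)) =
    LinearMap.range (hX (1 + mono 1 0 + mono k b) (1 + mono 0 1 + mono a l)) := by
  have hcoprime : IsRelPrime (swapVars (ZMod 2) (trinomial (ZMod 2) b k))
      (trinomial (ZMod 2) a l) := isRelPrime_swapVars_trinomial h
  rw [swapVars_trinomial] at hcoprime
  exact ker_hZdag_eq_range_hX_of_isRelPrime hcoprime

/-- Every BB code with the toric layout is topological, except the single pathological
case `(ᾱ, β̄, a, b) = (0, 0, 1, 1)`: the chain complex `R → R² → R` is exact in the middle. -/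
theorem bb_code_topological (α β : ℕ) (a b : ℤ)
    (hpath : ¬(α = 0 ∧ β = 0 ∧ a = 1 ∧ b = 1)) :
    LinearMap.ker (hZdag (1 + mono 1 0 + mono (-(α : ℤ)) b) (1 + mono 0 1 + mono a (-(β : ℤ)))) =
    LinearMap.range (hX (1 + mono 1 0 + mono (-(α : ℤ)) b) (1 + mono 0 1 + mono a (-(β : ℤ)))) :=
  bb_code_topological_general (by omega)
end
end

section
/- For the pathological parameter choice α = β = 0, a = b = 1, so that f = g = 1 + x + y in R, the BB-code chain complex fails to be exact at the middle term: for h_X : R → R × R, u ↦ (f·u, g·u), and h_Z† : R × R → R, (u, v) ↦ g·u + f·v, one has LinearMap.range h_X ≠ LinearMap.ker h_Z† (indeed the pair (1, 1) lies in the kernel of h_Z† but not in the range of h_X). -/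
/-!
For `f = g` the pair `(1, 1)` always lies in the kernel of `h_Z†`, and it lies in the range of `h_X`
exactly when `f` is a unit. Any two finite subsets of `ℤ × ℤ`, nonempty and not both singletons,
have at least two sums that are attained only once, so if a product of nonzero Laurent polynomials
has a factor with at least two terms, it has at least two terms itself. Hence every unit is a
monomial, and `1 + x + y` is not.
-/

noncomputable section

section Units

open Finset

variable {k A : Type*} [Semiring k] [NoZeroDivisors k]

theorem one_lt_card_support_mul [Add A] [TwoUniqueSums A] {p q : AddMonoidAlgebra k A}
    (h : 1 < #p.coeff.support * #q.coeff.support) : 1 < #(p * q).coeff.support := by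
  have add_mem_support {a b : A} (ha : a ∈ p.coeff.support) (hb : b ∈ q.coeff.support)
      (hab : UniqueAdd p.coeff.support q.coeff.support a b) :
      a + b ∈ (p * q).coeff.support := by
    rw [Finsupp.mem_support_iff] at ha hb ⊢
    rw [AddMonoidAlgebra.coeff_mul_add_of_uniqueAdd hab]
    exact mul_ne_zero ha hb
  obtain ⟨⟨a, b⟩, hab, ⟨c, d⟩, hcd, hne, uniq_ab, uniq_cd⟩ :=
    TwoUniqueSums.uniqueAdd_of_one_lt_card h
  obtain ⟨ha, hb⟩ := mem_product.mp hab
  obtain ⟨hc, hd⟩ := mem_product.mp hcd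
  refine one_lt_card.mpr
    ⟨a + b, add_mem_support ha hb uniq_ab, c + d, add_mem_support hc hd uniq_cd, fun hsum ↦ hne ?_⟩
  obtain ⟨hca, hdb⟩ := uniq_ab hc hd hsum.symm
  exact Prod.ext hca.symm hdb.symm

theorem card_support_eq_one_of_isUnit [Nontrivial k] [AddMonoid A] [TwoUniqueSums A]
    {p : AddMonoidAlgebra k A} (hp : IsUnit p) : #p.coeff.support = 1 := by
  obtain ⟨q, hpq⟩ := hp.exists_right_inv
  have card_mul_le : #p.coeff.support * #q.coeff.support ≤ 1 := by
    by_contra! h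
    have card_one_le : #(1 : AddMonoidAlgebra k A).coeff.support ≤ 1 :=
      (card_le_card Finsupp.support_single_subset).trans (card_singleton _).le
    exact (one_lt_card_support_mul h).not_ge (hpq ▸ card_one_le)
  have card_support_pos {r : AddMonoidAlgebra k A} (hr : r ≠ 0) : 0 < #r.coeff.support := by
    simpa [card_pos] using hr
  exact Nat.eq_one_of_mul_eq_one_right <| card_mul_le.antisymm <|
    Nat.mul_pos (card_support_pos (left_ne_zero_of_mul_eq_one hpq))
      (card_support_pos (right_ne_zero_of_mul_eq_one hpq))

theorem not_isUnit_one_add_mono_add_mono : ¬IsUnit (1 + mono 1 0 + mono 0 1) := by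
  intro h
  have zero_mem : 0 ∈ (1 + mono 1 0 + mono 0 1).coeff.support := by
    simp [mono, AddMonoidAlgebra.one_def]
  have x_mem : (1, 0) ∈ (1 + mono 1 0 + mono 0 1).coeff.support := by
    simp [mono, AddMonoidAlgebra.one_def]
  have two_terms := one_lt_card.mpr ⟨_, zero_mem, _, x_mem, by simp [Prod.ext_iff]⟩
  exact two_terms.ne' (card_support_eq_one_of_isUnit h)

end Units

section BBCode

variable {f g u v : LaurentR}

theorem mem_range_hX_iff : (u, v) ∈ LinearMap.range (hX f g) ↔ ∃ w, f * w = u ∧ g * w = v := by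
  simp [hX]

theorem mem_ker_hZdag_iff : (u, v) ∈ LinearMap.ker (hZdag f g) ↔ g * u = f * v := by
  have : CharP LaurentR 2 := charP_of_injective_algebraMap' (ZMod 2) 2
  simp [hZdag, CharTwo.add_eq_zero]

theorem one_one_mem_range_hX_self_iff : (1, 1) ∈ LinearMap.range (hX f f) ↔ IsUnit f := by
  simp only [mem_range_hX_iff, and_self, isUnit_iff_exists_inv]

theorem one_one_mem_ker_hZdag_iff : (1, 1) ∈ LinearMap.ker (hZdag f g) ↔ g = f := by
  rw [mem_ker_hZdag_iff, mul_one, mul_one]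

theorem bb_code_pathological_not_exact_general (hf : ¬IsUnit f) :
    LinearMap.range (hX f f) ≠ LinearMap.ker (hZdag f f) ∧
    ((1 : LaurentR), (1 : LaurentR)) ∈ LinearMap.ker (hZdag f f) ∧
    ((1 : LaurentR), (1 : LaurentR)) ∉ LinearMap.range (hX f f) := by
  have mem_ker : (1, 1) ∈ LinearMap.ker (hZdag f f) := one_one_mem_ker_hZdag_iff.mpr rfl
  have notMem_range : (1, 1) ∉ LinearMap.range (hX f f) := mt one_one_mem_range_hX_self_iff.mp hf
  exact ⟨(ne_of_mem_of_not_mem' mem_ker notMem_range).symm, mem_ker, notMem_range⟩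

end BBCode

/-- For the pathological choice `f = g = 1 + x + y`, the BB chain complex fails to be exact at
the middle term: the pair `(1, 1)` lies in the kernel of `h_Z†` but not in the range of `h_X`. -/
theorem bb_code_pathological_not_exact :
    LinearMap.range (hX (1 + mono 1 0 + mono 0 1) (1 + mono 1 0 + mono 0 1)) ≠
      LinearMap.ker (hZdag (1 + mono 1 0 + mono 0 1) (1 + mono 1 0 + mono 0 1)) ∧
    ((1 : LaurentR), (1 : LaurentR)) ∈
      LinearMap.ker (hZdag (1 + mono 1 0 + mono 0 1) (1 + mono 1 0 + mono 0 1)) ∧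
    ((1 : LaurentR), (1 : LaurentR)) ∉
      LinearMap.range (hX (1 + mono 1 0 + mono 0 1) (1 + mono 1 0 + mono 0 1)) :=
  bb_code_pathological_not_exact_general not_isUnit_one_add_mono_add_mono
end
end

section
/- For every integer α and every nonzero integer b, the three-term Laurent polynomial f = 1 + x + x^{-α} y^{b} is irreducible in R, the two-variable Laurent polynomial ring over F₂. (This is the irreducibility of the bivariate-bicycle generating polynomials with toric layout, proved via a generalized Eisenstein criterion at the prime ideal (x + 1) of F₂[x^{±1}].) -/
noncomputable section

/-!
For a domain `R`, regard `R[x^±, y^±]` as `A[y^±]` with `A = R[x^±]`. For a prime `p` of the domain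
`A` and `q` not divisible by `p`, the polynomial `q y ^ n + p` is Eisenstein at `(p)`: it is
primitive because a nonunit dividing `p` is an associate of `p`, hence does not divide `q`.
Inverting the prime `y`, which does not divide `q y ^ n + p`, preserves irreducibility, and
`y ↦ y⁻¹` takes care of negative exponents. The theorem is the case `p = x + 1`, `q = x ^ (-α)`;
here `p` is prime in `R[x^±]` because `X + 1` is prime in `R[X]` and does not divide `X`.
-/

section Away

variable {R : Type*} (S : Type*) {x : R}

theorem algebraMap_dvd_algebraMap_iff_of_away [CommSemiring R] [CommSemiring S] [Algebra R S]
    [IsLocalization.Away x S] {p a : R} (hp : Prime p) (hpx : ¬ p ∣ x) :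
    algebraMap R S p ∣ algebraMap R S a ↔ p ∣ a := by
  refine ⟨fun ⟨c, hc⟩ ↦ ?_, map_dvd _⟩
  have not_dvd_pow (k : ℕ) : ¬ p ∣ x ^ k := fun h ↦ hpx (hp.dvd_of_dvd_pow h)
  obtain ⟨n, c', hc'⟩ := IsLocalization.Away.surj x c
  have hmap : algebraMap R S (a * x ^ n) = algebraMap R S (p * c') := by
    rw [map_mul, map_mul, map_pow, hc, ← hc', mul_assoc]
  obtain ⟨m, hm⟩ := IsLocalization.Away.exists_of_eq x hmap
  have hdvd : p ∣ x ^ m * (a * x ^ n) := hm ▸ (dvd_mul_right p c').mul_left _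
  have hdvd' : p ∣ a * x ^ n := (hp.dvd_or_dvd hdvd).resolve_left (not_dvd_pow m)
  exact (hp.dvd_or_dvd hdvd').resolve_right (not_dvd_pow n)

variable [CommRing R] [IsDomain R] [CommRing S] [Algebra R S] [IsLocalization.Away x S]

theorem prime_algebraMap_of_away {p : R} (hp : Prime p) (hpx : ¬ p ∣ x) :
    Prime (algebraMap R S p) := by
  have dvd_iff {a : R} : algebraMap R S p ∣ algebraMap R S a ↔ p ∣ a :=
    algebraMap_dvd_algebraMap_iff_of_away S hp hpx
  refine ⟨?_, ?_, fun a b hab ↦ ?_⟩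
  · have hx : x ≠ 0 := fun h ↦ hpx (h ▸ dvd_zero p)
    exact (map_ne_zero_iff _ (IsLocalization.injective S
      (powers_le_nonZeroDivisors_of_noZeroDivisors hx))).2 hp.ne_zero
  · rw [isUnit_iff_dvd_one, ← map_one (algebraMap R S), dvd_iff, ← isUnit_iff_dvd_one]
    exact hp.not_isUnit
  · have ha := IsLocalization.Away.associated_sec_fst x a
    have hb := IsLocalization.Away.associated_sec_fst x b
    rw [← (ha.mul_mul hb).dvd_iff_dvd_right, ← map_mul, dvd_iff] at hab
    rw [← ha.dvd_iff_dvd_right, ← hb.dvd_iff_dvd_right, dvd_iff, dvd_iff]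
    exact hp.dvd_or_dvd hab

theorem irreducible_algebraMap_of_away {g : R} (hx : Prime x) (hg : Irreducible g)
    (hxg : ¬ x ∣ g) : Irreducible (algebraMap R S g) := by
  refine ⟨fun hu ↦ ?_, fun a b hab ↦ ?_⟩
  · obtain ⟨n, hn⟩ := (IsLocalization.Away.algebraMap_isUnit_iff x).1 hu
    obtain ⟨i, -, hi⟩ := (dvd_prime_pow hx n).1 hn
    rcases eq_or_ne i 0 with rfl | hi0
    · exact hg.not_isUnit (associated_one_iff_isUnit.1 (pow_zero x ▸ hi))
    · exact hxg ((dvd_pow_self x hi0).trans hi.symm.dvd)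
  · obtain ⟨m, a', ha⟩ := IsLocalization.Away.surj x a
    obtain ⟨k, b', hb⟩ := IsLocalization.Away.surj x b
    have hinj : Function.Injective (algebraMap R S) :=
      IsLocalization.injective S (powers_le_nonZeroDivisors_of_noZeroDivisors hx.ne_zero)
    have hmul : a' * b' = g * x ^ (m + k) := hinj <| by
      rw [map_mul, map_mul, map_pow, ← ha, ← hb, hab, pow_add, mul_mul_mul_comm]
    obtain ⟨i, j, u, v, -, huv, rfl, rfl⟩ := mul_eq_mul_prime_pow hx hmul
    have isUnit_of {c : S} {w : R} {l n : ℕ}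
        (hc : c * algebraMap R S x ^ n = algebraMap R S (w * x ^ l)) (hw : IsUnit w) :
        IsUnit c := by
      refine isUnit_of_mul_isUnit_left (y := algebraMap R S x ^ n) ?_
      rw [hc, map_mul, map_pow]
      exact (hw.map _).mul (IsLocalization.Away.algebraMap_pow_isUnit x l)
    exact (hg.isUnit_or_isUnit huv).imp (isUnit_of ha) (isUnit_of hb)

end Away

section Eisenstein

open Polynomial

variable {A : Type*} [CommRing A] {p q : A} {n : ℕ}

theorem isPrimitive_C_mul_X_pow_add_C (hn : n ≠ 0) (hp : Irreducible p) (hpq : ¬ p ∣ q) :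
    (C q * X ^ n + C p).IsPrimitive := by
  intro r hr
  rw [C_dvd_iff_dvd_coeff] at hr
  have hrq : r ∣ q := by simpa [coeff_C, hn] using hr n
  have hrp : r ∣ p := by simpa [hn.symm] using hr 0
  exact (hp.dvd_iff.1 hrp).resolve_right fun h ↦ hpq (h.dvd.trans hrq)

theorem irreducible_C_mul_X_pow_add_C [IsDomain A] (hn : n ≠ 0) (hp : Prime p) (hpq : ¬ p ∣ q) :
    Irreducible (C q * X ^ n + C p) := by
  have hq : q ≠ 0 := fun h ↦ hpq (h ▸ dvd_zero p)
  have hpos : 0 < (C q * X ^ n).degree := by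
    rw [degree_C_mul_X_pow n hq]
    exact_mod_cast Nat.pos_of_ne_zero hn
  have hdeg : (C q * X ^ n + C p).degree = (n : WithBot ℕ) := by
    rw [degree_add_C hpos, degree_C_mul_X_pow n hq]
  have hlead : (C q * X ^ n + C p).leadingCoeff = q := by
    rw [leadingCoeff_add_of_degree_lt' (degree_C_le.trans_lt hpos), leadingCoeff_C_mul_X_pow]
  have hsq : ¬ p ^ 2 ∣ p := by
    simpa using (pow_dvd_pow_iff hp.ne_zero hp.not_isUnit (n := 2) (m := 1)).not
  refine irreducible_of_eisenstein_criterion (P := Ideal.span {p})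
    ((Ideal.span_singleton_prime hp.ne_zero).2 hp) ?_ (fun k hk ↦ ?_) ?_ ?_
    (isPrimitive_C_mul_X_pow_add_C hn hp.irreducible hpq)
  · rwa [hlead, Ideal.mem_span_singleton]
  · rw [hdeg, Nat.cast_lt] at hk
    rw [Ideal.mem_span_singleton, coeff_add, coeff_C_mul_X_pow, if_neg hk.ne, zero_add, coeff_C]
    split_ifs <;> simp
  · rwa [degree_add_C hpos]
  · rw [Ideal.span_singleton_pow, Ideal.mem_span_singleton]
    simpa [hn.symm] using hsq

end Eisenstein

section Laurent

open LaurentPolynomial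

theorem irreducible_C_mul_T_add_C {A : Type*} [CommRing A] [IsDomain A] {p q : A} {b : ℤ}
    (hb : b ≠ 0) (hp : Prime p) (hpq : ¬ p ∣ q) : Irreducible (C q * T b + C p) := by
  have natCast_case {n : ℕ} (hn : n ≠ 0) : Irreducible (C q * T n + C p) := by
    have hX : ¬ Polynomial.X ∣ Polynomial.C q * Polynomial.X ^ n + Polynomial.C p := by
      simpa [Polynomial.X_dvd_iff, hn.symm] using hp.ne_zero
    simpa [algebraMap_eq_toLaurent] using irreducible_algebraMap_of_away A[T;T⁻¹]
      Polynomial.prime_X (irreducible_C_mul_X_pow_add_C hn hp hpq) hX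
  obtain ⟨n, rfl | rfl⟩ := b.eq_nat_or_neg
  · exact natCast_case (by exact_mod_cast hb)
  · rw [← MulEquiv.irreducible_iff (invert (R := A))]
    simpa only [map_add, map_mul, invert_C, invert_T, neg_neg] using
      natCast_case (n := n) (by simpa using hb)

variable {R : Type*} [CommRing R] {r u : R}

theorem not_X_sub_C_dvd_X (hr : r ≠ 0) :
    ¬ Polynomial.X - Polynomial.C r ∣ (Polynomial.X : Polynomial R) := by
  rwa [Polynomial.dvd_iff_isRoot, Polynomial.IsRoot, Polynomial.eval_X]

theorem prime_T_one_sub_C [IsDomain R] (hr : r ≠ 0) : Prime (T 1 - C r) := by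
  simpa [algebraMap_eq_toLaurent] using
    prime_algebraMap_of_away R[T;T⁻¹] (Polynomial.prime_X_sub_C r) (not_X_sub_C_dvd_X hr)

theorem not_T_one_sub_C_dvd_C_mul_T [IsDomain R] (hr : r ≠ 0) (hu : u ≠ 0) (a : ℤ) :
    ¬ T 1 - C r ∣ C u * T a := by
  have hCu : ¬ Polynomial.X - Polynomial.C r ∣ Polynomial.C u := by
    rwa [Polynomial.dvd_iff_isRoot, Polynomial.IsRoot, Polynomial.eval_C]
  rw [(isUnit_T a).dvd_mul_right]
  simpa [algebraMap_eq_toLaurent] using (algebraMap_dvd_algebraMap_iff_of_away R[T;T⁻¹]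
    (Polynomial.prime_X_sub_C r) (not_X_sub_C_dvd_X hr)).not.2 hCu

/-- The identification of `R[x^±, y^±]`, encoded as a group algebra of `ℤ × ℤ`, with the iterated
Laurent polynomial ring `R[x^±][y^±]`: the outer variable is `y`. -/
def iteratedLaurentEquiv (R : Type*) [CommSemiring R] :
    AddMonoidAlgebra R (ℤ × ℤ) ≃+* R[T;T⁻¹][T;T⁻¹] :=
  AddMonoidAlgebra.curryRingEquiv.trans AddMonoidAlgebra.commRingEquiv

theorem iteratedLaurentEquiv_single {R : Type*} [CommSemiring R] (i j : ℤ) (r : R) :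
    iteratedLaurentEquiv R (.single (i, j) r) = C (C r * T i) * T j := by
  rw [← single_eq_C_mul_T, ← single_eq_C_mul_T, iteratedLaurentEquiv, RingEquiv.trans_apply,
    AddMonoidAlgebra.curryRingEquiv_single, AddMonoidAlgebra.commRingEquiv_single_single]

open AddMonoidAlgebra in
theorem bb_polynomial_irreducible_general [IsDomain R] (hr : r ≠ 0) (hu : u ≠ 0) (a : ℤ) {b : ℤ}
    (hb : b ≠ 0) :
    Irreducible (single (0, 0) r + single (1, 0) 1 + single (a, b) u :
      AddMonoidAlgebra R (ℤ × ℤ)) := by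
  have hr' : -r ≠ 0 := neg_ne_zero.2 hr
  have himage : iteratedLaurentEquiv R (single (0, 0) r + single (1, 0) 1 + single (a, b) u) =
      C (C u * T a) * T b + C (T 1 - C (-r)) := by
    simp only [map_add, map_sub, map_neg, iteratedLaurentEquiv_single, T_zero, mul_one, map_one,
      one_mul]
    ring
  rw [← MulEquiv.irreducible_iff (iteratedLaurentEquiv R), himage]
  exact irreducible_C_mul_T_add_C hb (prime_T_one_sub_C hr')
    (not_T_one_sub_C_dvd_C_mul_T hr' hu a)

end Laurent

/-- For every integer `α` and every nonzero integer `b`, the three-term Laurent polynomial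
`f = 1 + x + x^{-α} y^{b}` is irreducible in the two-variable Laurent polynomial ring over `F₂`. -/
theorem bb_polynomial_irreducible (α b : ℤ) (hb : b ≠ 0) :
    Irreducible (1 + mono 1 0 + mono (-α) b) :=
  bb_polynomial_irreducible_general one_ne_zero one_ne_zero (-α) hb
end
end

section
/- Let f, g ∈ R and let ℓ₀, m₀, ℓ, m be positive integers such that x^{ℓ₀} − 1 ∈ Ideal.span {f, g} and y^{m₀} − 1 ∈ Ideal.span {f, g}. Then dim_{F₂} R ⧸ (f, g, x^{ℓ} − 1, y^{m} − 1) = dim_{F₂} R ⧸ (f, g, x^{gcd(ℓ, ℓ₀)} − 1, y^{gcd(m, m₀)} − 1). In particular, the logical-qubit count k(ℓ, m) = 2·dim_{F₂} R ⧸ (f, g, x^{ℓ} − 1, y^{m} − 1) of a BB code on an ℓ × m torus satisfies k(ℓ, m) = k(gcd(ℓ, ℓ₀), gcd(m, m₀)), where ℓ₀ and m₀ are the anyon periods in the x and y directions. -/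
/-!
Modulo an ideal `I`, the powers `u ^ n` equal to `1` are those whose exponent `n` is a multiple of
the order of `u` in the quotient ring. Hence `(u ^ a - 1, u ^ b - 1) = (u ^ gcd(a, b) - 1)` as
ideals of any commutative ring. Once `u ^ a₀ - 1` lies in `I`, adjoining it to
`I + (u ^ a - 1)` is harmless, so `I + (u ^ a - 1) = I + (u ^ gcd(a, a₀) - 1)`. Doing this for
`x` and for `y` with `I = (f, g)` identifies the two ideals, not just the dimensions of their
quotients.
-/

noncomputable section

section CommRing

variable {A : Type*} [CommRing A]

theorem pow_gcd_sub_one_mem_iff {I : Ideal A} {u : A} {a b : ℕ} :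
    u ^ Nat.gcd a b - 1 ∈ I ↔ u ^ a - 1 ∈ I ∧ u ^ b - 1 ∈ I := by
  simp only [← Ideal.Quotient.mk_eq_mk_iff_sub_mem, map_pow, map_one, pow_gcd_eq_one]

theorem span_pow_gcd_sub_one (u : A) (a b : ℕ) :
    Ideal.span {u ^ Nat.gcd a b - 1} = Ideal.span {u ^ a - 1, u ^ b - 1} :=
  eq_of_forall_ge_iff fun I => by
    simp only [Ideal.span_le, Set.insert_subset_iff, Set.singleton_subset_iff, SetLike.mem_coe,
      pow_gcd_sub_one_mem_iff]

theorem sup_span_pow_gcd_sub_one {I : Ideal A} {u : A} {n : ℕ} (hu : u ^ n - 1 ∈ I) (a : ℕ) :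
    I ⊔ Ideal.span {u ^ Nat.gcd a n - 1} = I ⊔ Ideal.span {u ^ a - 1} := by
  have hle : Ideal.span {u ^ n - 1} ≤ I := (Ideal.span_singleton_le_iff_mem I).2 hu
  rw [span_pow_gcd_sub_one, Ideal.span_insert, sup_left_comm, sup_eq_left.2 hle, sup_comm]

theorem sup_span_pair_pow_gcd_sub_one {I : Ideal A} {u v : A} {a₀ b₀ : ℕ}
    (hu : u ^ a₀ - 1 ∈ I) (hv : v ^ b₀ - 1 ∈ I) (a b : ℕ) :
    I ⊔ Ideal.span {u ^ Nat.gcd a a₀ - 1, v ^ Nat.gcd b b₀ - 1} =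
      I ⊔ Ideal.span {u ^ a - 1, v ^ b - 1} := by
  simp only [Ideal.span_insert, sup_sup_distrib_left I, sup_span_pow_gcd_sub_one hu,
    sup_span_pow_gcd_sub_one hv]

theorem logical_dim_gcd_general (K : Type*) [CommRing K] [Algebra K A] {f g u v : A}
    {a₀ b₀ : ℕ} (hu : u ^ a₀ - 1 ∈ Ideal.span {f, g}) (hv : v ^ b₀ - 1 ∈ Ideal.span {f, g})
    (a b : ℕ) :
    Module.finrank K (A ⧸ Ideal.span {f, g, u ^ a - 1, v ^ b - 1}) =
      Module.finrank K
        (A ⧸ Ideal.span {f, g, u ^ Nat.gcd a a₀ - 1, v ^ Nat.gcd b b₀ - 1}) := by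
  have hspan (p q : A) : Ideal.span {f, g, p, q} = Ideal.span {f, g} ⊔ Ideal.span {p, q} := by
    simp only [Ideal.span_insert, sup_assoc]
  rw [hspan, hspan, sup_span_pair_pow_gcd_sub_one hu hv]

end CommRing

theorem mono_pow (i j : ℤ) (n : ℕ) : mono i j ^ n = mono (n * i) (n * j) := by
  simp [mono]

theorem mono_natCast_zero (n : ℕ) : mono n 0 = mono 1 0 ^ n := by
  simp [mono_pow]

theorem mono_zero_natCast (n : ℕ) : mono 0 n = mono 0 1 ^ n := by
  simp [mono_pow]

/-- If `x^{ℓ₀} − 1` and `y^{m₀} − 1` lie in the ideal `(f, g)` (anyon periods), then the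
logical dimension of a BB code on an `ℓ × m` torus depends only on `gcd(ℓ, ℓ₀)` and
`gcd(m, m₀)`:
`dim_{F₂} R/(f, g, x^ℓ − 1, y^m − 1) = dim_{F₂} R/(f, g, x^{gcd(ℓ,ℓ₀)} − 1, y^{gcd(m,m₀)} − 1)`. -/
theorem logical_dim_gcd (f g : LaurentR) (ℓ₀ m₀ ℓ m : ℕ)
    (hℓ₀ : 0 < ℓ₀) (hm₀ : 0 < m₀) (hℓ : 0 < ℓ) (hm : 0 < m)
    (hx : mono (ℓ₀ : ℤ) 0 - 1 ∈ Ideal.span ({f, g} : Set LaurentR))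
    (hy : mono 0 (m₀ : ℤ) - 1 ∈ Ideal.span ({f, g} : Set LaurentR)) :
    Module.finrank (ZMod 2)
      (LaurentR ⧸ Ideal.span ({f, g, mono (ℓ : ℤ) 0 - 1, mono 0 (m : ℤ) - 1} : Set LaurentR)) =
    Module.finrank (ZMod 2)
      (LaurentR ⧸ Ideal.span ({f, g, mono (Nat.gcd ℓ ℓ₀ : ℤ) 0 - 1,
        mono 0 (Nat.gcd m m₀ : ℤ) - 1} : Set LaurentR)) := by
  rw [mono_natCast_zero, mono_natCast_zero, mono_zero_natCast, mono_zero_natCast]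
  exact logical_dim_gcd_general _ (mono_natCast_zero ℓ₀ ▸ hx) (mono_zero_natCast m₀ ▸ hy) ℓ m
end
end

section
/- Let R be a commutative ring and a, b, c, d ∈ R. Assume both Koszul complexes R → R × R → R are exact at the middle term: LinearMap.ker ((u, v) ↦ a·u + b·v) = LinearMap.range (w ↦ (b·w, −a·w)) and LinearMap.ker ((u, v) ↦ c·u + d·v) = LinearMap.range (w ↦ (d·w, −c·w)). Let R₁ = R ⧸ Ideal.span {c, d} and R₂ = R ⧸ Ideal.span {a, b}, and form the modified Koszul complexes R₁ → R₁ × R₁ → R₁ with maps ∂̃₂ : w ↦ (b̄·w, −ā·w) and ∂̃₁ : (u, v) ↦ ā·u + b̄·v (where ā, b̄ are the residue classes of a, b in R₁), and symmetrically σ̃₂, σ̃₁ over R₂ using the classes of c, d. Then the homology modules H(a, b; c, d) := ker ∂̃₁ ⧸ im ∂̃₂ and H(c, d; a, b) := ker σ̃₁ ⧸ im σ̃₂ are isomorphic as R-modules. -/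
/-!
Put `I = (a, b)` and `J = (c, d)`. Both homologies are `(I ∩ J) / IJ`, that is
`Tor₁(R ⧸ I, R ⧸ J)`, which is symmetric in `I` and `J`. Indeed a cycle of `H(a, b; c, d)` lifts to
`(u, v) ∈ R × R` with `a * u + b * v ∈ I ∩ J`. This value lies in `IJ` iff it is also attained on
`J × J`, that is iff `(u, v) ∈ J × J + ker ∂₁`; as `ker ∂₁ = im ∂₂` by exactness, this says that
`(u, v)` reduces to a boundary.
-/

noncomputable section

variable (R : Type) [CommRing R]

/-- The modified Koszul map `∂̃₁ : R₁ × R₁ → R₁`, `(u, v) ↦ ā·u + b̄·v`, where `R₁ = R ⧸ (c, d)`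
and `ā, b̄` are the residue classes of `a, b`, as an `R`-linear map. -/
def modD1 (a b c d : R) :
    (R ⧸ Ideal.span ({c, d} : Set R)) × (R ⧸ Ideal.span ({c, d} : Set R)) →ₗ[R]
      (R ⧸ Ideal.span ({c, d} : Set R)) :=
  (LinearMap.mulLeft R (Ideal.Quotient.mk (Ideal.span ({c, d} : Set R)) a)).coprod
    (LinearMap.mulLeft R (Ideal.Quotient.mk (Ideal.span ({c, d} : Set R)) b))

/-- The modified Koszul map `∂̃₂ : R₁ → R₁ × R₁`, `w ↦ (b̄·w, −ā·w)`, as an `R`-linear map. -/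
def modD2 (a b c d : R) :
    (R ⧸ Ideal.span ({c, d} : Set R)) →ₗ[R]
      (R ⧸ Ideal.span ({c, d} : Set R)) × (R ⧸ Ideal.span ({c, d} : Set R)) :=
  (LinearMap.mulLeft R (Ideal.Quotient.mk (Ideal.span ({c, d} : Set R)) b)).prod
    (-(LinearMap.mulLeft R (Ideal.Quotient.mk (Ideal.span ({c, d} : Set R)) a)))

/-- The homology `H(a, b; c, d) = ker ∂̃₁ ⧸ im ∂̃₂` of the modified Koszul complex. -/
abbrev koszulHomology (a b c d : R) :=
  (LinearMap.ker (modD1 R a b c d)) ⧸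
    ((LinearMap.range (modD2 R a b c d)).comap (LinearMap.ker (modD1 R a b c d)).subtype)

section Subquotient

variable {S M N : Type*} [Ring S] [AddCommGroup M] [AddCommGroup N] [Module S M] [Module S N]

/-- The isomorphism `M ⧸ f⁻¹(q) ≃ N ⧸ q` induced by a surjective linear map `f : M → N`. -/
def quotientComapEquivOfSurjective (f : M →ₗ[S] N) (hf : Function.Surjective f)
    (q : Submodule S N) : (M ⧸ q.comap f) ≃ₗ[S] (N ⧸ q) :=
  Submodule.quotEquivOfEq _ _ (by rw [LinearMap.ker_comp, Submodule.ker_mkQ]) ≪≫ₗ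
    (q.mkQ ∘ₗ f).quotKerEquivOfSurjective (q.mkQ_surjective.comp hf)

/-- The isomorphism of subquotients `p ⧸ (q ∩ p) ≃ p' ⧸ (q' ∩ p')` induced by a linear map `f` with
`f(p) = p'` and `f⁻¹(q') = q`. -/
def subquotientEquivOfMapOfComap (f : M →ₗ[S] N) {p q : Submodule S M} {p' q' : Submodule S N}
    (hp : p.map f = p') (hq : q'.comap f = q) :
    (p ⧸ q.comap p.subtype) ≃ₗ[S] (p' ⧸ q'.comap p'.subtype) := by
  subst hp hq
  exact quotientComapEquivOfSurjective (f.submoduleMap p) (f.submoduleMap_surjective p)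
    (q'.comap (p.map f).subtype)

end Subquotient

section InfModMul

variable {S : Type*} [CommRing S]

/-- The module `(I ∩ J) / IJ`, which is `Tor₁(S ⧸ I, S ⧸ J)`. -/
abbrev InfModMul (I J : Ideal S) :=
  ↥(I ⊓ J) ⧸ Submodule.comap (Submodule.subtype (I ⊓ J)) (I * J)

/-- The symmetry `(I ∩ J) / IJ ≃ (J ∩ I) / JI`. -/
def infModMulComm (I J : Ideal S) : InfModMul I J ≃ₗ[S] InfModMul J I :=
  subquotientEquivOfMapOfComap LinearMap.id
    (by rw [Submodule.map_id, inf_comm]) (by rw [Submodule.comap_id, mul_comm])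

end InfModMul

section Koszul

variable {S : Type*} [CommRing S]

/-- The Koszul differential `∂₁ : S × S → S`, `(u, v) ↦ a * u + b * v`. -/
abbrev koszulD1 (a b : S) : S × S →ₗ[S] S :=
  (LinearMap.mulLeft S a).coprod (LinearMap.mulLeft S b)

/-- The Koszul differential `∂₂ : S → S × S`, `w ↦ (b * w, -(a * w))`. -/
abbrev koszulD2 (a b : S) : S →ₗ[S] S × S :=
  (LinearMap.mulLeft S b).prod (-LinearMap.mulLeft S a)

theorem map_mulLeft_eq_span_singleton_mul (a : S) (J : Ideal S) :
    Submodule.map (LinearMap.mulLeft S a) J = Ideal.span {a} * J := by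
  ext x
  rw [Ideal.mem_span_singleton_mul]
  rfl

theorem map_koszulD1_prod (a b : S) (J : Ideal S) :
    Submodule.map (koszulD1 a b) (Submodule.prod J J) = Ideal.span {a, b} * J := by
  rw [LinearMap.map_coprod_prod, map_mulLeft_eq_span_singleton_mul,
    map_mulLeft_eq_span_singleton_mul, Ideal.span_insert, Ideal.sup_mul]

theorem range_koszulD1 (a b : S) : LinearMap.range (koszulD1 a b) = Ideal.span {a, b} := by
  rw [← Submodule.map_top, ← Submodule.prod_top, map_koszulD1_prod, Ideal.mul_top]

theorem map_comap_koszulD1 (a b : S) (J : Ideal S) :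
    Submodule.map (koszulD1 a b) (Submodule.comap (koszulD1 a b) J) = Ideal.span {a, b} ⊓ J := by
  rw [Submodule.map_comap_eq, range_koszulD1]

theorem comap_koszulD1_mul {a b : S} (h : Function.Exact (koszulD2 a b) (koszulD1 a b))
    (J : Ideal S) :
    Submodule.comap (koszulD1 a b) (Ideal.span {a, b} * J) =
      LinearMap.range (koszulD2 a b) ⊔ Submodule.prod J J := by
  rw [← map_koszulD1_prod, Submodule.comap_map_eq, h.linearMap_ker_eq, sup_comm]

/-- The reduction map `S × S → (S ⧸ J) × (S ⧸ J)`, along which elements of the Koszul complex are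
compared with elements of the modified one. -/
abbrev reducePair (J : Ideal S) : S × S →ₗ[S] (S ⧸ J) × (S ⧸ J) :=
  J.mkQ.prodMap J.mkQ

theorem reducePair_surjective (J : Ideal S) : Function.Surjective (reducePair J) :=
  J.mkQ_surjective.prodMap J.mkQ_surjective

theorem ker_reducePair (J : Ideal S) : LinearMap.ker (reducePair J) = Submodule.prod J J := by
  rw [LinearMap.ker_prodMap, Submodule.ker_mkQ]

end Koszul

section ModifiedKoszul

variable {R}

theorem modD1_comp_reducePair (a b c d : R) :
    modD1 R a b c d ∘ₗ reducePair (Ideal.span {c, d}) =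
      (Ideal.span {c, d}).mkQ ∘ₗ koszulD1 a b :=
  rfl

theorem modD2_comp_mkQ (a b c d : R) :
    modD2 R a b c d ∘ₗ (Ideal.span {c, d}).mkQ =
      reducePair (Ideal.span {c, d}) ∘ₗ koszulD2 a b :=
  rfl

theorem comap_ker_modD1 (a b c d : R) :
    (LinearMap.ker (modD1 R a b c d)).comap (reducePair (Ideal.span {c, d})) =
      Submodule.comap (koszulD1 a b) (Ideal.span {c, d}) := by
  rw [← LinearMap.ker_comp, modD1_comp_reducePair, LinearMap.ker_comp, Submodule.ker_mkQ]

theorem map_reducePair_comap_koszulD1 (a b c d : R) :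
    (Submodule.comap (koszulD1 a b) (Ideal.span {c, d})).map (reducePair (Ideal.span {c, d})) =
      LinearMap.ker (modD1 R a b c d) := by
  rw [← comap_ker_modD1, Submodule.map_comap_eq_of_surjective (reducePair_surjective _)]

theorem range_modD2 (a b c d : R) :
    LinearMap.range (modD2 R a b c d) =
      (LinearMap.range (koszulD2 a b)).map (reducePair (Ideal.span {c, d})) := by
  rw [← LinearMap.range_comp, ← modD2_comp_mkQ,
    LinearMap.range_comp_of_range_eq_top _ (Submodule.range_mkQ _)]

theorem comap_range_modD2 {a b : R} (hab : Function.Exact (koszulD2 a b) (koszulD1 a b))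
    (c d : R) :
    (LinearMap.range (modD2 R a b c d)).comap (reducePair (Ideal.span {c, d})) =
      Submodule.comap (koszulD1 a b) (Ideal.span {a, b} * Ideal.span {c, d}) := by
  rw [range_modD2, Submodule.comap_map_eq, ker_reducePair, comap_koszulD1_mul hab]

/-- The isomorphism of `H(a, b; c, d)` with `(I ∩ J) / IJ` for `I = (a, b)` and `J = (c, d)`,
sending the class of a cycle lifted to `(u, v)` to the class of `a * u + b * v`. -/
def koszulHomologyEquivInfModMul {a b : R}
    (hab : Function.Exact (koszulD2 a b) (koszulD1 a b)) (c d : R) :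
    koszulHomology R a b c d ≃ₗ[R] InfModMul (Ideal.span {a, b}) (Ideal.span {c, d}) :=
  (subquotientEquivOfMapOfComap (reducePair (Ideal.span {c, d}))
    (map_reducePair_comap_koszulD1 a b c d) (comap_range_modD2 hab c d)).symm ≪≫ₗ
    subquotientEquivOfMapOfComap (koszulD1 a b) (map_comap_koszulD1 a b _) rfl

end ModifiedKoszul

/-- Duality of Koszul complexes: if both Koszul complexes `R → R × R → R` (for `(a, b)` and
for `(c, d)`) are exact at the middle term, then the homologies of the modified Koszul
complexes, `H(a, b; c, d)` and `H(c, d; a, b)`, are isomorphic as `R`-modules. -/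
theorem koszul_duality (a b c d : R)
    (hab : LinearMap.ker ((LinearMap.mulLeft R a).coprod (LinearMap.mulLeft R b)) =
      LinearMap.range ((LinearMap.mulLeft R b).prod (-(LinearMap.mulLeft R a))))
    (hcd : LinearMap.ker ((LinearMap.mulLeft R c).coprod (LinearMap.mulLeft R d)) =
      LinearMap.range ((LinearMap.mulLeft R d).prod (-(LinearMap.mulLeft R c)))) :
    Nonempty ((koszulHomology R a b c d) ≃ₗ[R] (koszulHomology R c d a b)) := by
  have equiv_ab := koszulHomologyEquivInfModMul (LinearMap.exact_iff.2 hab) c d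
  have equiv_cd := koszulHomologyEquivInfModMul (LinearMap.exact_iff.2 hcd) a b
  exact ⟨equiv_ab ≪≫ₗ infModMulComm _ _ ≪≫ₗ equiv_cd.symm⟩
end
end

section
/- Let ℓ, m be positive integers and let S = F₂[x, y] ⧸ (x^{ℓ} − 1, y^{m} − 1), the group algebra of the finite abelian group ℤ/ℓ × ℤ/m over F₂. For any f, g ∈ S define h_X : S → S × S, u ↦ (f·u, g·u), and h_Z† : S × S → S, (u, v) ↦ g·u + f·v. Then LinearMap.range h_X ≤ LinearMap.ker h_Z†, and the F₂-dimension of the homology satisfies dim_{F₂} (ker h_Z† ⧸ range h_X) = 2 · dim_{F₂} (S ⧸ Ideal.span {f, g}). (This is the formula k(ℓ, m) = 2·dim_{F₂} R/(f, g, x^ℓ − 1, y^m − 1) for the number of logical qubits of a BB code on an ℓ × m torus.) -/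
noncomputable section

/-- The bivariate polynomial ring `F₂[x, y]`. -/
abbrev P2 : Type := MvPolynomial (Fin 2) (ZMod 2)

/-- `S = F₂[x, y] ⧸ (x^ℓ − 1, y^m − 1)`, the group algebra of `ℤ/ℓ × ℤ/m` over `F₂`. -/
abbrev Storus (ℓ m : ℕ) : Type :=
  P2 ⧸ Ideal.span ({(MvPolynomial.X 0 : P2) ^ ℓ - 1, (MvPolynomial.X 1 : P2) ^ m - 1} : Set P2)

/-- The BB check map `h_X : S → S × S`, `u ↦ (f·u, g·u)`, as an `F₂`-linear map. -/
def hXS (ℓ m : ℕ) (f g : Storus ℓ m) : Storus ℓ m →ₗ[ZMod 2] Storus ℓ m × Storus ℓ m :=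
  (LinearMap.mulLeft (ZMod 2) f).prod (LinearMap.mulLeft (ZMod 2) g)

/-- The BB check map `h_Z† : S × S → S`, `(u, v) ↦ g·u + f·v`, as an `F₂`-linear map. -/
def hZdagS (ℓ m : ℕ) (f g : Storus ℓ m) : Storus ℓ m × Storus ℓ m →ₗ[ZMod 2] Storus ℓ m :=
  (LinearMap.mulLeft (ZMod 2) g).coprod (LinearMap.mulLeft (ZMod 2) f)

/-!
For `f, g` in a commutative algebra `A`, the Koszul complex `A → A × A → A` has kernel
`Ann (f, g)` at one end and cokernel `A ⧸ (f, g)` at the other, and its Euler characteristic is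
`0`, so the dimension of its middle homology is `dim Ann (f, g) + dim A ⧸ (f, g)`. If `A` is a
Frobenius algebra with form `τ`, then `Ann I` is the orthogonal complement of `I` under
`(a, b) ↦ τ (a * b)`, so both summands agree. A group algebra is Frobenius, `τ` being the
coefficient of the identity, and the signs of the Koszul complex disappear in characteristic two.
-/

open LinearMap Module

section FrobeniusForm

/-- A linear form `τ` on an algebra is a Frobenius form if the associated bilinear form
`(a, b) ↦ τ (a * b)` is nondegenerate. -/
def IsFrobeniusForm {R A : Type*} [CommSemiring R] [Semiring A] [Algebra R A] (τ : A →ₗ[R] R) :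
    Prop :=
  ((LinearMap.mul R A).compr₂ τ).Nondegenerate

namespace IsFrobeniusForm

lemma comp_algEquiv {R A B : Type*} [CommSemiring R] [Semiring A] [Algebra R A] [Semiring B]
    [Algebra R B] {τ : B →ₗ[R] R} (hτ : IsFrobeniusForm τ) (e : A ≃ₐ[R] B) :
    IsFrobeniusForm (τ ∘ₗ e.toLinearMap) := by
  refine ⟨fun a ha => ?_, fun b hb => ?_⟩
  · refine (map_eq_zero_iff e e.injective).1 (hτ.1 _ fun y => ?_)
    simpa using ha (e.symm y)
  · refine (map_eq_zero_iff e e.injective).1 (hτ.2 _ fun y => ?_)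
    simpa using hb (e.symm y)

lemma orthogonal_eq_annihilator {R A : Type*} [CommSemiring R] [CommSemiring A] [Algebra R A]
    {τ : A →ₗ[R] R} (hτ : IsFrobeniusForm τ) (I : Ideal A) :
    BilinForm.orthogonal ((LinearMap.mul R A).compr₂ τ) (I.restrictScalars R) =
      I.annihilator.restrictScalars R := by
  ext a
  simp only [BilinForm.mem_orthogonal_iff, compr₂_apply, mul_apply',
    Submodule.restrictScalars_mem, Submodule.mem_annihilator, smul_eq_mul]
  refine ⟨fun h x hx => hτ.1 _ fun b => ?_, fun h x hx => ?_⟩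
  · have hxb : τ (x * b * a) = 0 := h _ (I.mul_mem_right b hx)
    rwa [compr₂_apply, mul_apply', show a * x * b = x * b * a by ring]
  · rw [mul_comm, h x hx, map_zero]

lemma finrank_annihilator {K A : Type*} [Field K] [CommRing A] [Algebra K A] [Module.Finite K A]
    {τ : A →ₗ[K] K} (hτ : IsFrobeniusForm τ) (I : Ideal A) :
    finrank K I.annihilator = finrank K (A ⧸ I) := calc
  finrank K I.annihilator
      = finrank K (BilinForm.orthogonal ((LinearMap.mul K A).compr₂ τ) (I.restrictScalars K)) := by
        rw [hτ.orthogonal_eq_annihilator]; rfl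
  _ = finrank K A - finrank K I := BilinForm.finrank_orthogonal hτ _
  _ = finrank K (A ⧸ I) := (Submodule.finrank_quotient I).symm

end IsFrobeniusForm

end FrobeniusForm

section GroupAlgebra

/-- The coefficient of the identity element, as a linear form on a group algebra. -/
def coeffZero (R G : Type*) [CommSemiring R] [Zero G] : AddMonoidAlgebra R G →ₗ[R] R :=
  Finsupp.lapply 0 ∘ₗ (AddMonoidAlgebra.coeffLinearEquiv R).toLinearMap

lemma isFrobeniusForm_coeffZero (R G : Type*) [CommSemiring R] [AddGroup G] :
    IsFrobeniusForm (coeffZero R G) := by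
  refine ⟨fun a ha => ?_, fun b hb => ?_⟩
  · ext k
    simpa [coeffZero] using ha (AddMonoidAlgebra.single (-k) 1)
  · ext k
    simpa [coeffZero] using hb (AddMonoidAlgebra.single (-k) 1)

end GroupAlgebra

section PiZModCharacter

variable {σ M : Type*} [Fintype σ] [CommMonoid M] {n : σ → ℕ} [∀ i, NeZero (n i)] {x : σ → M}

/-- The character of `∏ᵢ ℤ/nᵢ` sending the `i`-th generator to the `nᵢ`-th root of unity `xᵢ`. -/
def piZModChar (hx : ∀ i, x i ^ n i = 1) : AddChar (∀ i, ZMod (n i)) M :=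
  ∏ i, (AddChar.zmodChar (n i) (hx i)).compAddMonoidHom (Pi.evalAddMonoidHom _ i)

lemma piZModChar_apply (hx : ∀ i, x i ^ n i = 1) (k : ∀ i, ZMod (n i)) :
    piZModChar hx k = ∏ i, x i ^ (k i).val := by
  simp [piZModChar, AddChar.prod_apply, AddChar.zmodChar_apply]

lemma piZModChar_single [DecidableEq σ] (hx : ∀ i, x i ^ n i = 1) (i : σ) :
    piZModChar hx (Pi.single i 1) = x i := by
  have hi : AddChar.zmodChar (n i) (hx i) 1 = x i := by
    simpa using AddChar.zmodChar_apply' (hx i) 1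
  rw [piZModChar, AddChar.prod_apply, Fintype.prod_eq_single i fun j hj => by simp [hj]]
  simpa using hi

end PiZModCharacter

section RootsOfUnity

open MvPolynomial

variable {σ : Type*} (R : Type*) [CommRing R] (n : σ → ℕ)

/-- The ideal `(xᵢ ^ nᵢ - 1)ᵢ` of the polynomial ring `R[xᵢ]ᵢ`. -/
def rootsOfUnityIdeal : Ideal (MvPolynomial σ R) :=
  Ideal.span (Set.range fun i => X i ^ n i - 1)

lemma mk_X_pow_eq_one (i : σ) : Ideal.Quotient.mk (rootsOfUnityIdeal R n) (X i) ^ n i = 1 := by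
  rw [← map_pow, ← map_one (Ideal.Quotient.mk _), Ideal.Quotient.eq]
  exact Ideal.subset_span ⟨i, rfl⟩

variable [DecidableEq σ]

/-- The map `R[xᵢ]ᵢ ⧸ (xᵢ ^ nᵢ - 1)ᵢ → R[∏ᵢ ℤ/nᵢ]` sending `xᵢ` to the `i`-th generator. -/
def quotientToGroupAlgebra :
    MvPolynomial σ R ⧸ rootsOfUnityIdeal R n →ₐ[R] AddMonoidAlgebra R (∀ i, ZMod (n i)) :=
  Ideal.Quotient.liftₐ _ (aeval fun i => AddMonoidAlgebra.single (Pi.single i 1) 1) <| by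
    intro p hp
    refine (Ideal.span_le (I := RingHom.ker _)).2 ?_ hp
    rintro _ ⟨i, rfl⟩
    rw [SetLike.mem_coe, RingHom.mem_ker, map_sub, map_one, sub_eq_zero]
    simp [AddMonoidAlgebra.single_pow, ← Pi.single_smul, AddMonoidAlgebra.one_def]

lemma quotientToGroupAlgebra_mk_X (i : σ) :
    quotientToGroupAlgebra R n (Ideal.Quotient.mk _ (X i)) =
      AddMonoidAlgebra.single (Pi.single i 1) 1 :=
  aeval_X _ _

variable [Fintype σ] [∀ i, NeZero (n i)]

/-- The map `R[∏ᵢ ℤ/nᵢ] → R[xᵢ]ᵢ ⧸ (xᵢ ^ nᵢ - 1)ᵢ` sending the `i`-th generator to `xᵢ`. -/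
def groupAlgebraToQuotient :
    AddMonoidAlgebra R (∀ i, ZMod (n i)) →ₐ[R] MvPolynomial σ R ⧸ rootsOfUnityIdeal R n :=
  AddMonoidAlgebra.lift R _ _ (piZModChar (mk_X_pow_eq_one R n)).toMonoidHom

lemma groupAlgebraToQuotient_comp_quotientToGroupAlgebra :
    (groupAlgebraToQuotient R n).comp (quotientToGroupAlgebra R n) = AlgHom.id R _ := by
  apply Ideal.Quotient.algHom_ext
  ext i
  simp [quotientToGroupAlgebra_mk_X, groupAlgebraToQuotient, piZModChar_single]

lemma quotientToGroupAlgebra_comp_groupAlgebraToQuotient :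
    (quotientToGroupAlgebra R n).comp (groupAlgebraToQuotient R n) = AlgHom.id R _ := by
  ext k : 2
  have hk : ∑ i, (k i).val • (Pi.single i 1 : ∀ i, ZMod (n i)) = k := by
    simp [← Pi.single_smul, Finset.univ_sum_single]
  simp [-nsmul_eq_mul, groupAlgebraToQuotient, piZModChar_apply, quotientToGroupAlgebra_mk_X,
    AddMonoidAlgebra.single_pow, AddMonoidAlgebra.prod_single, hk]

/-- `R[xᵢ]ᵢ ⧸ (xᵢ ^ nᵢ - 1)ᵢ` is the group algebra of `∏ᵢ ℤ/nᵢ`. -/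
def quotientEquivGroupAlgebra :
    (MvPolynomial σ R ⧸ rootsOfUnityIdeal R n) ≃ₐ[R] AddMonoidAlgebra R (∀ i, ZMod (n i)) :=
  .ofAlgHom (quotientToGroupAlgebra R n) (groupAlgebraToQuotient R n)
    (quotientToGroupAlgebra_comp_groupAlgebraToQuotient R n)
    (groupAlgebraToQuotient_comp_quotientToGroupAlgebra R n)

end RootsOfUnity

section EulerCharacteristic

variable {K U V W : Type*} [DivisionRing K] [AddCommGroup U] [Module K U] [Module.Finite K U]
  [AddCommGroup V] [Module K V] [Module.Finite K V] [AddCommGroup W] [Module K W]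
  [Module.Finite K W]

lemma finrank_homology_add_finrank_add_finrank {α : U →ₗ[K] V} {β : V →ₗ[K] W}
    (h : range α ≤ ker β) :
    finrank K (ker β ⧸ (range α).submoduleOf (ker β)) + finrank K U + finrank K W =
      finrank K (ker α) + finrank K V + finrank K (W ⧸ range β) := by
  have hα := finrank_range_add_finrank_ker α
  have hβ := finrank_range_add_finrank_ker β
  have hcoker := (range β).finrank_quotient_add_finrank
  have hhom := ((range α).submoduleOf (ker β)).finrank_quotient_add_finrank
  rw [(Submodule.submoduleOfEquivOfLe h).finrank_eq] at hhom
  lia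

end EulerCharacteristic

section Koszul

variable (K : Type*) {A : Type*} [CommSemiring K] [CommRing A] [Algebra K A] (f g : A)

/-- The differential `A → A × A`, `u ↦ (f * u, g * u)`, of the Koszul complex of `(f, g)`. -/
def koszulD₂ : A →ₗ[K] A × A := (mulLeft K f).prod (mulLeft K g)

/-- The differential `A × A → A`, `(u, v) ↦ g * u - f * v`, of the Koszul complex of `(f, g)`.
The sign is carried by `f`, so that it disappears where `-f = f`. -/
def koszulD₁ : A × A →ₗ[K] A := (mulLeft K g).coprod (mulLeft K (-f))

lemma range_koszulD₂_le_ker_koszulD₁ : range (koszulD₂ K f g) ≤ ker (koszulD₁ K f g) := by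
  rintro _ ⟨u, rfl⟩
  change g * (f * u) + -f * (g * u) = 0
  ring

lemma ker_koszulD₂ :
    ker (koszulD₂ K f g) = (Ideal.span {f, g}).annihilator.restrictScalars K := by
  ext a
  simp [koszulD₂, Submodule.mem_annihilator_span, mul_comm]

lemma range_koszulD₁ : range (koszulD₁ K f g) = (Ideal.span {f, g}).restrictScalars K := by
  have hspan : (Ideal.span {f, g} : Ideal A) = Ideal.span {g, -f} := by
    rw [Ideal.span_pair_neg, Ideal.span_pair_comm]
  ext a
  rw [hspan, Submodule.restrictScalars_mem, Ideal.mem_span_pair]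
  simp [koszulD₁, mul_comm]

end Koszul

theorem bb_logical_qubit_count_general {K A : Type*} [Field K] [CommRing A] [Algebra K A]
    [Module.Finite K A] {τ : A →ₗ[K] K} (hτ : IsFrobeniusForm τ) (f g : A) :
    range (koszulD₂ K f g) ≤ ker (koszulD₁ K f g) ∧
      finrank K (ker (koszulD₁ K f g) ⧸
        (range (koszulD₂ K f g)).submoduleOf (ker (koszulD₁ K f g))) =
      2 * finrank K (A ⧸ Ideal.span {f, g}) := by
  have hle := range_koszulD₂_le_ker_koszulD₁ K f g
  have heuler := finrank_homology_add_finrank_add_finrank hle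
  have hker : finrank K (ker (koszulD₂ K f g)) = finrank K (A ⧸ Ideal.span {f, g}) := by
    rw [ker_koszulD₂]
    exact hτ.finrank_annihilator _
  have hcoker : finrank K (A ⧸ range (koszulD₁ K f g)) = finrank K (A ⧸ Ideal.span {f, g}) := by
    rw [range_koszulD₁]
    exact (Submodule.Quotient.restrictScalarsEquiv K _).finrank_eq
  rw [hker, hcoker, finrank_prod] at heuler
  exact ⟨hle, by lia⟩

section Torus

variable (ℓ m : ℕ)

lemma span_eq_rootsOfUnityIdeal :
    Ideal.span {(MvPolynomial.X 0 : P2) ^ ℓ - 1, (MvPolynomial.X 1 : P2) ^ m - 1} =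
      rootsOfUnityIdeal (ZMod 2) ![ℓ, m] := by
  rw [rootsOfUnityIdeal]
  congr 1
  ext p
  simp [Fin.exists_fin_two, eq_comm]

/-- `S` is the group algebra of `ℤ/ℓ × ℤ/m`, the latter written as a product over `Fin 2`. -/
def storusEquivGroupAlgebra [NeZero ℓ] [NeZero m] :
    Storus ℓ m ≃ₐ[ZMod 2] AddMonoidAlgebra (ZMod 2) (∀ i, ZMod (![ℓ, m] i)) :=
  haveI : ∀ i, NeZero (![ℓ, m] i) := Fin.forall_fin_two.2 ⟨‹_›, ‹_›⟩
  (Ideal.quotientEquivAlgOfEq _ (span_eq_rootsOfUnityIdeal ℓ m)).trans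
    (quotientEquivGroupAlgebra (ZMod 2) ![ℓ, m])

instance finite_storus [NeZero ℓ] [NeZero m] : Module.Finite (ZMod 2) (Storus ℓ m) :=
  haveI : ∀ i, NeZero (![ℓ, m] i) := Fin.forall_fin_two.2 ⟨‹_›, ‹_›⟩
  Module.Finite.equiv (storusEquivGroupAlgebra ℓ m).symm.toLinearEquiv

lemma hZdagS_eq_koszulD₁ (f g : Storus ℓ m) : hZdagS ℓ m f g = koszulD₁ (ZMod 2) f g := by
  rw [koszulD₁, ZModModule.neg_eq_self, hZdagS]

end Torus

/-- On an `ℓ × m` torus, `range h_X ≤ ker h_Z†` and the number of logical qubits of the CSS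
code defined by `f, g` is `k(ℓ, m) = dim_{F₂}(ker h_Z† ⧸ range h_X) = 2·dim_{F₂} S/(f, g)`. -/
theorem bb_logical_qubit_count (ℓ m : ℕ) (hℓ : 0 < ℓ) (hm : 0 < m) (f g : Storus ℓ m) :
    LinearMap.range (hXS ℓ m f g) ≤ LinearMap.ker (hZdagS ℓ m f g) ∧
    Module.finrank (ZMod 2)
      ((LinearMap.ker (hZdagS ℓ m f g)) ⧸
        ((LinearMap.range (hXS ℓ m f g)).comap (LinearMap.ker (hZdagS ℓ m f g)).subtype)) =
    2 * Module.finrank (ZMod 2) (Storus ℓ m ⧸ Ideal.span ({f, g} : Set (Storus ℓ m))) := by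
  have : NeZero ℓ := ⟨hℓ.ne'⟩
  have : NeZero m := ⟨hm.ne'⟩
  rw [hZdagS_eq_koszulD₁]
  exact bb_logical_qubit_count_general
    ((isFrobeniusForm_coeffZero _ _).comp_algEquiv (storusEquivGroupAlgebra ℓ m)) f g
end
end

section
/- Let f' = x + x² + y³ and g' = y + y² + x³ in F₂[x, y] (these generate, after clearing monomial units, the same ideal as the BB(1̄, 1̄, 3, 3) polynomials f = 1 + x + x^{-1}y³ and g = 1 + y + y^{-1}x³ on the torus). For all positive integers ℓ, m, the dimension d(ℓ, m) := dim_{F₂} F₂[x, y] ⧸ (f', g', x^{ℓ} − 1, y^{m} − 1) is: 8 if 12 divides gcd(ℓ, m); 6 if 6 divides gcd(ℓ, m) but 12 does not; 4 if 3 divides gcd(ℓ, m) but 6 does not; and 0 otherwise. (Equivalently, the logical dimension k(ℓ, m) = 2·d(ℓ, m) of the BB(1̄, 1̄, 3, 3) code equals 16, 12, 8 or 0 in the respective cases.) -/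
noncomputable section

/-- `f' = x + x² + y³`, a polynomial form of the BB(1̄, 1̄, 3, 3) generator `f`. -/
def fBB : P2 := MvPolynomial.X 0 + (MvPolynomial.X 0) ^ 2 + (MvPolynomial.X 1) ^ 3

/-- `g' = y + y² + x³`, a polynomial form of the BB(1̄, 1̄, 3, 3) generator `g`. -/
def gBB : P2 := MvPolynomial.X 1 + (MvPolynomial.X 1) ^ 2 + (MvPolynomial.X 0) ^ 3

/-- `d(ℓ, m) = dim_{F₂} F₂[x, y] ⧸ (f', g', x^ℓ − 1, y^m − 1)`. -/
def dBB (ℓ m : ℕ) : ℕ :=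
  Module.finrank (ZMod 2)
    (P2 ⧸ Ideal.span ({fBB, gBB, (MvPolynomial.X 0 : P2) ^ ℓ - 1,
      (MvPolynomial.X 1 : P2) ^ m - 1} : Set P2))

/-!
Put `q = X² + X + 1`. On the torus, a common zero of `f'` and `g'` satisfies
`q(x) (x + y + xy) = 0` and hence `q(x)³ = 0`. The scheme of common zeros is the disjoint union of
the reduced points of the diagonal `y = x` over `q(x) = 0` and of the curvilinear scheme
`y = x⁵ + x⁴ + x` over `q(x)³ = 0`. Since `x³ - 1 = (x + 1) q(x)` and `y³ - 1 = q(x)`, both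
`xⁿ = 1` and `yⁿ = 1` amount to `q(x)ᵏ = 0`, where `k` depends only on `gcd(n, 12)`. This cuts the
second component down to degree `2k` and keeps the first one, of degree `2`, as long as `k ≠ 0`.
-/

/-- A common zero `(x, y)` of `f'` and `g'` on the torus, with coordinates in a ring in which
`2 = 0`. Only `x` is asked to be a unit, as `y ∣ x ^ 3`; see `IsTorusZero.isUnit_snd`. -/
structure IsTorusZero {R : Type*} [CommRing R] (x y : R) : Prop where
  two_eq_zero : (2 : R) = 0
  left_eq_zero : x + x ^ 2 + y ^ 3 = 0
  right_eq_zero : y + y ^ 2 + x ^ 3 = 0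
  isUnit_fst : IsUnit x

/-- The least `k` such that every common zero `(x, y)` of `f'` and `g'` on the torus with
`x ^ n = 1` satisfies `(x ^ 2 + x + 1) ^ k = 0`. -/
def contactOrder (n : ℕ) : ℕ :=
  if 12 ∣ n then 3 else if 6 ∣ n then 2 else if 3 ∣ n then 1 else 0

theorem contactOrder_le_three (n : ℕ) : contactOrder n ≤ 3 := by
  unfold contactOrder
  split_ifs <;> norm_num

theorem contactOrder_gcd_twelve (n : ℕ) : contactOrder (Nat.gcd 12 n) = contactOrder n := by
  simp [contactOrder, Nat.dvd_gcd_iff]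

section CharTwo

theorem two_eq_zero_of_algebra (K A : Type*) [CommRing K] [CharP K 2] [CommRing A] [Algebra K A] :
    (2 : A) = 0 := by
  rw [← map_ofNat (algebraMap K A), CharTwo.two_eq_zero, map_zero]

variable {R : Type*} [CommRing R] {x : R}

theorem isUnit_of_quadratic_pow_eq_zero (h2 : (2 : R) = 0) {k : ℕ}
    (h : (x ^ 2 + x + 1) ^ k = 0) : IsUnit x := by
  have hunit : IsUnit (1 + (x ^ 2 + x + 1)) := IsNilpotent.isUnit_one_add ⟨k, h⟩
  refine isUnit_of_dvd_unit ⟨x + 1, ?_⟩ hunit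
  linear_combination h2

theorem isTorusZero_self (h2 : (2 : R) = 0) (h : x ^ 2 + x + 1 = 0) : IsTorusZero x x where
  two_eq_zero := h2
  left_eq_zero := by linear_combination x * h
  right_eq_zero := by linear_combination x * h
  isUnit_fst := isUnit_of_quadratic_pow_eq_zero h2 ((pow_one _).trans h)

theorem isTorusZero_twisted (h2 : (2 : R) = 0) (h : (x ^ 2 + x + 1) ^ 3 = 0) :
    IsTorusZero x (x ^ 5 + x ^ 4 + x) where
  two_eq_zero := h2
  left_eq_zero := by grind
  right_eq_zero := by grind
  isUnit_fst := isUnit_of_quadratic_pow_eq_zero h2 h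

end CharTwo

namespace IsTorusZero

variable {R : Type*} [CommRing R] {x y : R}

theorem isUnit_snd (t : IsTorusZero x y) : IsUnit y := by
  refine isUnit_of_dvd_unit ⟨-(1 + y), ?_⟩ (t.isUnit_fst.pow 3)
  linear_combination t.right_eq_zero

theorem symm (t : IsTorusZero x y) : IsTorusZero y x :=
  ⟨t.two_eq_zero, t.right_eq_zero, t.left_eq_zero, t.isUnit_snd⟩

theorem isUnit_add_one (t : IsTorusZero x y) : IsUnit (x + 1) := by
  refine isUnit_of_dvd_unit ⟨-x, ?_⟩ (t.isUnit_snd.pow 3)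
  linear_combination t.left_eq_zero

theorem quadratic_snd (t : IsTorusZero x y) :
    y ^ 2 + y + 1 = (x + 1) * (x ^ 2 + x + 1) := by
  linear_combination t.right_eq_zero - (x ^ 3 + x ^ 2 + x) * t.two_eq_zero

theorem quadratic_snd_pow_eq_zero_iff (t : IsTorusZero x y) {k : ℕ} :
    (y ^ 2 + y + 1) ^ k = 0 ↔ (x ^ 2 + x + 1) ^ k = 0 := by
  rw [t.quadratic_snd, mul_pow, (t.isUnit_add_one.pow k).mul_right_eq_zero]

theorem quadratic_mul_eq_zero (t : IsTorusZero x y) :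
    (x ^ 2 + x + 1) * (x + y + x * y) = 0 := by
  linear_combination t.left_eq_zero + (1 - y) * t.right_eq_zero +
    (x * y + x ^ 2 * y + x ^ 3 * y) * t.two_eq_zero

theorem quadratic_pow_three_eq_zero (t : IsTorusZero x y) : (x ^ 2 + x + 1) ^ 3 = 0 := by
  -- Modulo the annihilator of `x ^ 2 + x + 1` we have `(x + 1) * y = x`, which turns
  -- `(x + 1) ^ 2 * (y + y ^ 2 + x ^ 3)` into `x * (x ^ 2 + x + 1) ^ 2`.
  have h : x * (x ^ 2 + x + 1) ^ 3 = 0 := by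
    grind [t.quadratic_mul_eq_zero, t.right_eq_zero, t.two_eq_zero]
  exact t.isUnit_fst.mul_right_eq_zero.1 h

theorem quadratic_mul_snd_sub_twisted (t : IsTorusZero x y) :
    (x ^ 2 + x + 1) * (y - (x ^ 5 + x ^ 4 + x)) = 0 := by
  -- With `q = x ^ 2 + x + 1`, `x * (1 + q)` is an inverse of `x + 1` modulo `q ^ 2`.
  grind [t.quadratic_mul_eq_zero, t.quadratic_pow_three_eq_zero, t.two_eq_zero]

theorem snd_sub_fst_mul_snd_sub_twisted (t : IsTorusZero x y) :
    (y - x) * (y - (x ^ 5 + x ^ 4 + x)) = 0 := by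
  have twisted := (isTorusZero_twisted t.two_eq_zero t.quadratic_pow_three_eq_zero).right_eq_zero
  -- With `h = x ^ 5 + x ^ 4 + x`, `1 + x + h` is a multiple of `x ^ 2 + x + 1` in characteristic 2.
  linear_combination t.right_eq_zero - twisted -
    (x ^ 3 + x + 1) * t.quadratic_mul_snd_sub_twisted +
    (x ^ 3 + x ^ 2) * (y - (x ^ 5 + x ^ 4 + x)) * t.two_eq_zero

theorem pow_three_sub_one (t : IsTorusZero x y) :
    x ^ 3 - 1 = (x + 1) * (x ^ 2 + x + 1) := by
  linear_combination (-x ^ 2 - x - 1) * t.two_eq_zero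

theorem pow_three_eq_one_iff (t : IsTorusZero x y) : x ^ 3 = 1 ↔ x ^ 2 + x + 1 = 0 := by
  rw [← sub_eq_zero, t.pow_three_sub_one, t.isUnit_add_one.mul_right_eq_zero]

theorem pow_six_eq_one_iff (t : IsTorusZero x y) : x ^ 6 = 1 ↔ (x ^ 2 + x + 1) ^ 2 = 0 := by
  have h : x ^ 6 - 1 = (x ^ 3 - 1) ^ 2 := by linear_combination (x ^ 3 - 1) * t.two_eq_zero
  rw [← sub_eq_zero, h, t.pow_three_sub_one, mul_pow,
    (t.isUnit_add_one.pow 2).mul_right_eq_zero]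

theorem pow_twelve_eq_one (t : IsTorusZero x y) : x ^ 12 = 1 := by
  have h : x ^ 12 - 1 = (x ^ 3 - 1) ^ 4 := by
    linear_combination (2 * x ^ 9 - 3 * x ^ 6 + 2 * x ^ 3 - 1) * t.two_eq_zero
  rw [← sub_eq_zero, h, t.pow_three_sub_one, mul_pow,
    pow_eq_zero_of_le (by norm_num) t.quadratic_pow_three_eq_zero, mul_zero]

theorem subsingleton_of_pow_four_eq_one (t : IsTorusZero x y) (h : x ^ 4 = 1) :
    Subsingleton R := by
  have hzero : (x + 1) ^ 4 = 0 := by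
    linear_combination h + (2 * x ^ 3 + 3 * x ^ 2 + 2 * x + 1) * t.two_eq_zero
  exact subsingleton_of_zero_eq_one (isUnit_zero_iff.1 (hzero ▸ t.isUnit_add_one.pow 4))

theorem pow_eq_one_iff_of_dvd_twelve (t : IsTorusZero x y) {n : ℕ} (hn : n ∣ 12) :
    x ^ n = 1 ↔ (x ^ 2 + x + 1) ^ contactOrder n = 0 := by
  have of_dvd_four (h4 : n ∣ 4) : x ^ n = 1 ↔ (x ^ 2 + x + 1) ^ 0 = 0 := by
    rw [pow_zero]
    constructor
    · intro h
      have := t.subsingleton_of_pow_four_eq_one <|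
        orderOf_dvd_iff_pow_eq_one.1 ((orderOf_dvd_of_pow_eq_one h).trans h4)
      exact Subsingleton.elim _ _
    · intro h
      exact (subsingleton_of_zero_eq_one h.symm).elim _ _
  have hmem : n ∈ ({1, 2, 3, 4, 6, 12} : Finset ℕ) :=
    (by decide : Nat.divisors 12 = {1, 2, 3, 4, 6, 12}) ▸ Nat.mem_divisors.2 ⟨hn, by norm_num⟩
  fin_cases hmem
  · exact of_dvd_four (by norm_num)
  · exact of_dvd_four (by norm_num)
  · simpa [contactOrder] using t.pow_three_eq_one_iff
  · exact of_dvd_four (by norm_num)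
  · exact t.pow_six_eq_one_iff
  · exact iff_of_true t.pow_twelve_eq_one t.quadratic_pow_three_eq_zero

theorem pow_eq_one_iff (t : IsTorusZero x y) (n : ℕ) :
    x ^ n = 1 ↔ (x ^ 2 + x + 1) ^ contactOrder n = 0 := by
  rw [← contactOrder_gcd_twelve, ← t.pow_eq_one_iff_of_dvd_twelve (Nat.gcd_dvd_left 12 n),
    pow_gcd_eq_one, and_iff_right t.pow_twelve_eq_one]

theorem pow_eq_one_comm (t : IsTorusZero x y) (n : ℕ) : y ^ n = 1 ↔ x ^ n = 1 := by
  rw [t.symm.pow_eq_one_iff, t.pow_eq_one_iff, t.quadratic_snd_pow_eq_zero_iff]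

theorem pow_eq_one_and_pow_eq_one_iff (t : IsTorusZero x y) (ℓ m : ℕ) :
    x ^ ℓ = 1 ∧ y ^ m = 1 ↔ (x ^ 2 + x + 1) ^ contactOrder (Nat.gcd ℓ m) = 0 := by
  rw [t.pow_eq_one_comm, ← pow_gcd_eq_one, t.pow_eq_one_iff]

end IsTorusZero

section GraphIdeal

open Polynomial

variable {K : Type*} [CommRing K]

/-- The ideal of the graph `y = h(x)` over the zero locus `p(x) = 0`. -/
def graphIdeal (p h : K[X]) : Ideal (MvPolynomial (Fin 2) K) :=
  Ideal.span {aeval (MvPolynomial.X 0) p, MvPolynomial.X 1 - aeval (MvPolynomial.X 0) h}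

theorem aeval_eq_zero_of_mem_graphIdeal {p h : K[X]} {F : MvPolynomial (Fin 2) K}
    (hF : F ∈ graphIdeal p h) :
    MvPolynomial.aeval ![AdjoinRoot.root p, AdjoinRoot.mk p h] F = 0 := by
  suffices graphIdeal p h ≤ RingHom.ker (MvPolynomial.aeval
      ![AdjoinRoot.root p, AdjoinRoot.mk p h] : MvPolynomial (Fin 2) K →ₐ[K] AdjoinRoot p) from
    this hF
  rw [graphIdeal, Ideal.span_le]
  rintro F (rfl | rfl) <;> simp [RingHom.mem_ker, ← aeval_algHom_apply, AdjoinRoot.aeval_eq]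

variable {p h : K[X]}

theorem aeval_mk_X_zero_graphIdeal :
    aeval (Ideal.Quotient.mk (graphIdeal p h) (MvPolynomial.X 0)) p = 0 := by
  have hp : Ideal.Quotient.mkₐ K (graphIdeal p h) (aeval (MvPolynomial.X 0) p) = 0 :=
    Ideal.Quotient.eq_zero_iff_mem.2 (Ideal.subset_span (Set.mem_insert _ _))
  rwa [← aeval_algHom_apply] at hp

theorem mk_X_one_graphIdeal :
    Ideal.Quotient.mk (graphIdeal p h) (MvPolynomial.X 1) =
      aeval (Ideal.Quotient.mk (graphIdeal p h) (MvPolynomial.X 0)) h := by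
  have hh : Ideal.Quotient.mkₐ K (graphIdeal p h)
      (MvPolynomial.X 1 - aeval (MvPolynomial.X 0) h) = 0 :=
    Ideal.Quotient.eq_zero_iff_mem.2 (Ideal.subset_span (Set.mem_insert_of_mem _ rfl))
  rwa [map_sub, ← aeval_algHom_apply, sub_eq_zero] at hh

variable (p h) in
/-- Restriction of a polynomial in `x` and `y` to the graph of `h` over `p(x) = 0`. -/
def graphRestrict : (MvPolynomial (Fin 2) K ⧸ graphIdeal p h) →ₐ[K] AdjoinRoot p :=
  Ideal.Quotient.liftₐ _ (MvPolynomial.aeval ![AdjoinRoot.root p, AdjoinRoot.mk p h])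
    fun _ => aeval_eq_zero_of_mem_graphIdeal

theorem graphRestrict_mk (F : MvPolynomial (Fin 2) K) :
    graphRestrict p h (Ideal.Quotient.mk _ F) =
      MvPolynomial.aeval ![AdjoinRoot.root p, AdjoinRoot.mk p h] F :=
  rfl

variable (p h) in
/-- The coordinate ring of the graph of `h` over `p(x) = 0` is `K[x] ⧸ (p)`. -/
def graphQuotientEquiv : (MvPolynomial (Fin 2) K ⧸ graphIdeal p h) ≃ₐ[K] AdjoinRoot p :=
  AlgEquiv.ofAlgHom (graphRestrict p h)
    (AdjoinRoot.liftAlgHom p (Algebra.ofId K _) (Ideal.Quotient.mk _ (MvPolynomial.X 0)) <| by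
      rw [Algebra.toRingHom_ofId, ← aeval_def, aeval_mk_X_zero_graphIdeal])
    (AdjoinRoot.algHom_ext <| by simp [graphRestrict_mk])
    (Ideal.Quotient.algHom_ext _ <| MvPolynomial.algHom_ext fun i => by
      fin_cases i
      · simp [graphRestrict_mk]
      · simpa [graphRestrict_mk, aeval_def] using mk_X_one_graphIdeal.symm)

theorem isCoprime_graphIdeal {p' h' : K[X]} (hcop : IsCoprime p (h - h')) :
    IsCoprime (graphIdeal p h) (graphIdeal p' h') := by
  obtain ⟨a, b, hab⟩ := hcop
  have hab' := congrArg (aeval (MvPolynomial.X 0 : MvPolynomial (Fin 2) K)) hab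
  simp only [map_add, map_sub, map_mul, map_one] at hab'
  refine Ideal.isCoprime_iff_exists.2
    ⟨_, Ideal.mem_span_pair.2 ⟨aeval (MvPolynomial.X 0) a, -aeval (MvPolynomial.X 0) b, rfl⟩,
      _, Ideal.mem_span_pair.2 ⟨0, aeval (MvPolynomial.X 0) b, rfl⟩, ?_⟩
  linear_combination hab'

theorem finrank_quotient_graphIdeal_mul [Nontrivial K] {p' h' : K[X]} (hp : p.Monic)
    (hp' : p'.Monic) (hcop : IsCoprime p (h - h')) :
    Module.finrank K (MvPolynomial (Fin 2) K ⧸ graphIdeal p h * graphIdeal p' h') =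
      p.natDegree + p'.natDegree := by
  have := hp.free_adjoinRoot
  have := hp.finite_adjoinRoot
  have := hp'.free_adjoinRoot
  have := hp'.finite_adjoinRoot
  have crt : (MvPolynomial (Fin 2) K ⧸ graphIdeal p h * graphIdeal p' h') ≃ₐ[K]
      (MvPolynomial (Fin 2) K ⧸ graphIdeal p h) × (MvPolynomial (Fin 2) K ⧸ graphIdeal p' h') :=
    AlgEquiv.ofRingEquiv (f := Ideal.quotientMulEquivQuotientProd _ _
      (isCoprime_graphIdeal hcop)) fun _ => rfl
  have e := crt.trans ((graphQuotientEquiv p h).prodCongr (graphQuotientEquiv p' h'))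
  rw [e.toLinearEquiv.finrank_eq, Module.finrank_prod,
    (AdjoinRoot.powerBasis' hp).finrank, (AdjoinRoot.powerBasis' hp').finrank,
    AdjoinRoot.powerBasis'_dim, AdjoinRoot.powerBasis'_dim]

end GraphIdeal

section IdealBB

open Polynomial

variable (K : Type*) [CommRing K]

/-- The polynomial `h` for which `y = h(x)` is the component of the common zeros of `f'` and `g'` on
the torus where `y = x ^ 2` modulo `q = x ^ 2 + x + 1`. The equations determine `h` modulo `q ^ 3`,
and this is the representative of degree less than `6`. -/
def twistedBranch : K[X] := X ^ 5 + X ^ 4 + X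

/-- The ideal `(f', g', x ^ ℓ - 1, y ^ m - 1)` over an arbitrary ring of coefficients. -/
def idealBB (ℓ m : ℕ) : Ideal (MvPolynomial (Fin 2) K) :=
  Ideal.span {MvPolynomial.X 0 + MvPolynomial.X 0 ^ 2 + MvPolynomial.X 1 ^ 3,
    MvPolynomial.X 1 + MvPolynomial.X 1 ^ 2 + MvPolynomial.X 0 ^ 3,
    MvPolynomial.X 0 ^ ℓ - 1, MvPolynomial.X 1 ^ m - 1}

variable {K} {ℓ m : ℕ}

theorem aeval_cyclotomic_three {A : Type*} [CommRing A] [Algebra K A] (a : A) :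
    aeval a (cyclotomic 3 K) = a ^ 2 + a + 1 := by
  simp [cyclotomic_three]

theorem aeval_twistedBranch {A : Type*} [CommRing A] [Algebra K A] (a : A) :
    aeval a (twistedBranch K) = a ^ 5 + a ^ 4 + a := by
  simp [twistedBranch]

theorem idealBB_le_iff {J : Ideal (MvPolynomial (Fin 2) K)} {x y : MvPolynomial (Fin 2) K ⧸ J}
    (hx : x = Ideal.Quotient.mk J (MvPolynomial.X 0))
    (hy : y = Ideal.Quotient.mk J (MvPolynomial.X 1)) :
    idealBB K ℓ m ≤ J ↔
      x + x ^ 2 + y ^ 3 = 0 ∧ y + y ^ 2 + x ^ 3 = 0 ∧ x ^ ℓ = 1 ∧ y ^ m = 1 := by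
  rw [idealBB, Ideal.span_le]
  simp [Set.insert_subset_iff, ← Ideal.Quotient.eq_zero_iff_mem, sub_eq_zero, hx, hy]

theorem idealBB_le_iff_quadratic_pow_eq_zero {J : Ideal (MvPolynomial (Fin 2) K)}
    {x y : MvPolynomial (Fin 2) K ⧸ J} (hx : x = Ideal.Quotient.mk J (MvPolynomial.X 0))
    (hy : y = Ideal.Quotient.mk J (MvPolynomial.X 1)) (t : IsTorusZero x y) :
    idealBB K ℓ m ≤ J ↔ (x ^ 2 + x + 1) ^ contactOrder (Nat.gcd ℓ m) = 0 := by
  rw [idealBB_le_iff hx hy, and_iff_right t.left_eq_zero, and_iff_right t.right_eq_zero,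
    t.pow_eq_one_and_pow_eq_one_iff]

variable [CharP K 2]

theorem isTorusZero_mk_idealBB (hℓm : Nat.gcd ℓ m ≠ 0) :
    IsTorusZero (Ideal.Quotient.mk (idealBB K ℓ m) (MvPolynomial.X 0))
      (Ideal.Quotient.mk (idealBB K ℓ m) (MvPolynomial.X 1)) := by
  obtain ⟨left, right, hx, hy⟩ := (idealBB_le_iff (ℓ := ℓ) (m := m) (K := K) rfl rfl).1 le_rfl
  have h2 := two_eq_zero_of_algebra K (MvPolynomial (Fin 2) K ⧸ idealBB K ℓ m)
  rcases not_and_or.1 (mt Nat.gcd_eq_zero_iff.2 hℓm) with hℓ | hm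
  · exact ⟨h2, left, right, .of_pow_eq_one hx hℓ⟩
  · exact IsTorusZero.symm ⟨h2, right, left, .of_pow_eq_one hy hm⟩

theorem isCoprime_cyclotomic_three_sub_twistedBranch :
    IsCoprime (cyclotomic 3 K) (X - twistedBranch K) := by
  refine ⟨X ^ 3 + X + 1, 1, ?_⟩
  rw [cyclotomic_three, twistedBranch]
  linear_combination (X ^ 3 + X ^ 2 + X) * two_eq_zero_of_algebra K K[X]

theorem idealBB_le_graphIdeal_diagonal (hk : contactOrder (Nat.gcd ℓ m) ≠ 0) :
    idealBB K ℓ m ≤ graphIdeal (cyclotomic 3 K) X := by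
  have hq := aeval_mk_X_zero_graphIdeal (p := cyclotomic 3 K) (h := X)
  have hy := mk_X_one_graphIdeal (p := cyclotomic 3 K) (h := X)
  rw [aeval_cyclotomic_three] at hq
  rw [aeval_X] at hy
  rw [idealBB_le_iff_quadratic_pow_eq_zero rfl hy.symm
    (isTorusZero_self (two_eq_zero_of_algebra K _) hq), hq, zero_pow hk]

theorem idealBB_le_graphIdeal_twisted :
    idealBB K ℓ m ≤
      graphIdeal (cyclotomic 3 K ^ contactOrder (Nat.gcd ℓ m)) (twistedBranch K) := by
  set k := contactOrder (Nat.gcd ℓ m)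
  have hq := aeval_mk_X_zero_graphIdeal (p := cyclotomic 3 K ^ k) (h := twistedBranch K)
  have hy := mk_X_one_graphIdeal (p := cyclotomic 3 K ^ k) (h := twistedBranch K)
  rw [map_pow, aeval_cyclotomic_three] at hq
  rw [aeval_twistedBranch] at hy
  exact (idealBB_le_iff_quadratic_pow_eq_zero rfl hy.symm (isTorusZero_twisted
    (two_eq_zero_of_algebra K _) (pow_eq_zero_of_le (contactOrder_le_three _) hq))).2 hq

theorem graphIdeal_mul_le_idealBB (hℓm : Nat.gcd ℓ m ≠ 0) :
    graphIdeal (cyclotomic 3 K) X *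
      graphIdeal (cyclotomic 3 K ^ contactOrder (Nat.gcd ℓ m)) (twistedBranch K) ≤
        idealBB K ℓ m := by
  have t := isTorusZero_mk_idealBB (K := K) hℓm
  have hk := (idealBB_le_iff_quadratic_pow_eq_zero rfl rfl t).1 le_rfl
  rw [graphIdeal, graphIdeal, Ideal.span_pair_mul_span_pair, Ideal.span_le]
  rintro F (rfl | rfl | rfl | rfl) <;>
    rw [SetLike.mem_coe, ← Ideal.Quotient.eq_zero_iff_mem] <;>
    simp only [aeval_twistedBranch, aeval_cyclotomic_three, map_add, map_sub, map_mul, map_pow,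
      map_one, aeval_X]
  · rw [hk, mul_zero]
  · exact t.quadratic_mul_snd_sub_twisted
  · rw [hk, mul_zero]
  · exact t.snd_sub_fst_mul_snd_sub_twisted

theorem idealBB_eq_mul (hk : contactOrder (Nat.gcd ℓ m) ≠ 0) (hℓm : Nat.gcd ℓ m ≠ 0) :
    idealBB K ℓ m = graphIdeal (cyclotomic 3 K) X *
      graphIdeal (cyclotomic 3 K ^ contactOrder (Nat.gcd ℓ m)) (twistedBranch K) := by
  refine le_antisymm ?_ (graphIdeal_mul_le_idealBB hℓm)
  rw [Ideal.mul_eq_inf_of_isCoprime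
    (isCoprime_graphIdeal isCoprime_cyclotomic_three_sub_twistedBranch)]
  exact le_inf (idealBB_le_graphIdeal_diagonal hk) idealBB_le_graphIdeal_twisted

theorem finrank_quotient_idealBB_of_contactOrder_ne_zero (hℓm : Nat.gcd ℓ m ≠ 0)
    (hk : contactOrder (Nat.gcd ℓ m) ≠ 0) :
    Module.finrank K (MvPolynomial (Fin 2) K ⧸ idealBB K ℓ m) =
      2 + contactOrder (Nat.gcd ℓ m) * 2 := by
  have := CharP.nontrivial_of_char_ne_one (R := K) (v := 2) (by norm_num)
  have hmonic := cyclotomic.monic 3 K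
  rw [idealBB_eq_mul hk hℓm, finrank_quotient_graphIdeal_mul hmonic (hmonic.pow _)
    isCoprime_cyclotomic_three_sub_twistedBranch, hmonic.natDegree_pow, natDegree_cyclotomic,
    Nat.totient_prime Nat.prime_three]

theorem finrank_quotient_idealBB_of_contactOrder_eq_zero (hℓm : Nat.gcd ℓ m ≠ 0)
    (hk : contactOrder (Nat.gcd ℓ m) = 0) :
    Module.finrank K (MvPolynomial (Fin 2) K ⧸ idealBB K ℓ m) = 0 := by
  have := CharP.nontrivial_of_char_ne_one (R := K) (v := 2) (by norm_num)
  have t := isTorusZero_mk_idealBB (K := K) hℓm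
  have h := (idealBB_le_iff_quadratic_pow_eq_zero rfl rfl t).1 le_rfl
  rw [hk, pow_zero] at h
  have := subsingleton_of_zero_eq_one h.symm
  exact Module.finrank_zero_of_subsingleton

end IdealBB

theorem bb_1133_topological_frustration_general (K : Type*) [CommRing K] [CharP K 2] {ℓ m : ℕ}
    (hℓm : Nat.gcd ℓ m ≠ 0) :
    Module.finrank K (MvPolynomial (Fin 2) K ⧸ idealBB K ℓ m) =
      if 12 ∣ Nat.gcd ℓ m then 8
      else if 6 ∣ Nat.gcd ℓ m then 6
      else if 3 ∣ Nat.gcd ℓ m then 4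
      else 0 := by
  rcases eq_or_ne (contactOrder (Nat.gcd ℓ m)) 0 with hk | hk
  · rw [finrank_quotient_idealBB_of_contactOrder_eq_zero hℓm hk]
    unfold contactOrder at hk
    split_ifs at hk ⊢
    rfl
  · rw [finrank_quotient_idealBB_of_contactOrder_ne_zero hℓm hk]
    unfold contactOrder at hk ⊢
    split_ifs at hk ⊢ <;> first | rfl | contradiction

/-- Size dependence of the logical dimension of the BB(1̄, 1̄, 3, 3) code: `d(ℓ, m)` equals
`8` if `12 ∣ gcd(ℓ, m)`; `6` if `6 ∣ gcd(ℓ, m)` but not `12`; `4` if `3 ∣ gcd(ℓ, m)` but not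
`6`; and `0` otherwise. -/
theorem bb_1133_topological_frustration (ℓ m : ℕ) (hℓ : 0 < ℓ) (hm : 0 < m) :
    dBB ℓ m =
      if 12 ∣ Nat.gcd ℓ m then 8
      else if 6 ∣ Nat.gcd ℓ m then 6
      else if 3 ∣ Nat.gcd ℓ m then 4
      else 0 :=
  bb_1133_topological_frustration_general (ZMod 2) (Nat.gcd_pos_of_pos_left m hℓ).ne'
end
end

section
/- For the BB(1̄, 1̄, 3, 3̄) code, with f = 1 + x + x^{-1} y^{-3} and g = 1 + y + y^{-1} x³ in R, the topological index is Q = dim_{F₂} R ⧸ (f, g) = 13; hence k_max = 26. -/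
noncomputable section

/-!
Clearing denominators, `y g = y + y² + x³` cuts out an affine Weierstrass curve `W`, namely
`Y² + Y = X³` with `X = -x`, and `x y³ f = 1 + x (1 + x) y³` becomes a function `h` on it. Neither
`X` nor `Y` vanishes where `h` does, so inverting them is harmless and `R/(f, g) = F[W]/(h)`. The
dimension of the latter is the degree of the norm of `h` down to `F[X]`; writing `h = p + q Y` with
`deg p = deg q = 5`, that degree is `max (2 deg p) (2 deg q + 3) = 13`.
-/

open AddMonoidAlgebra (single)
open Polynomial
open scoped Polynomial.Bivariate

section LaurentLift

variable {F B : Type*} [CommSemiring F] [CommSemiring B] [Algebra F B]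

/-- The `F`-algebra homomorphism from the two-variable Laurent polynomials over `F` that evaluates
`x` and `y` at the units `u` and `v`. -/
def laurentLift (u v : Bˣ) : AddMonoidAlgebra F (ℤ × ℤ) →ₐ[F] B :=
  AddMonoidAlgebra.lift F B (ℤ × ℤ) <| (Units.coeHom B).comp <|
    ((zpowersHom Bˣ u).coprod (zpowersHom Bˣ v)).comp (MulEquiv.prodMultiplicative ℤ ℤ).toMonoidHom

lemma laurentLift_single (u v : Bˣ) (i j : ℤ) (c : F) :
    laurentLift u v (single (i, j) c) = c • ((u ^ i * v ^ j : Bˣ) : B) := by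
  simp [laurentLift]

lemma laurentLift_x (u v : Bˣ) : laurentLift u v (single (1, 0) 1 : AddMonoidAlgebra F _) = u := by
  simp [laurentLift_single]

lemma laurentLift_y (u v : Bˣ) : laurentLift u v (single (0, 1) 1 : AddMonoidAlgebra F _) = v := by
  simp [laurentLift_single]

open Multiplicative in
lemma monoidHom_ext_int_prod {M : Type*} [Monoid M] {φ ψ : Multiplicative (ℤ × ℤ) →* M}
    (hx : φ (ofAdd (1, 0)) = ψ (ofAdd (1, 0))) (hy : φ (ofAdd (0, 1)) = ψ (ofAdd (0, 1))) :
    φ = ψ := by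
  have hfst : φ.comp (AddMonoidHom.inl ℤ ℤ).toMultiplicative =
      ψ.comp (AddMonoidHom.inl ℤ ℤ).toMultiplicative := MonoidHom.ext_mint hx
  have hsnd : φ.comp (AddMonoidHom.inr ℤ ℤ).toMultiplicative =
      ψ.comp (AddMonoidHom.inr ℤ ℤ).toMultiplicative := MonoidHom.ext_mint hy
  refine MonoidHom.ext <| Multiplicative.rec fun (i, j) ↦ ?_
  have hij : ofAdd (i, j) = ofAdd (i, 0) * ofAdd (0, j) := by simp [← ofAdd_add]
  rw [hij, map_mul, map_mul]
  exact congr($hfst (ofAdd i) * $hsnd (ofAdd j))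

lemma laurent_algHom_ext {B : Type*} [Semiring B] [Algebra F B]
    {φ ψ : AddMonoidAlgebra F (ℤ × ℤ) →ₐ[F] B}
    (hx : φ (single (1, 0) 1) = ψ (single (1, 0) 1))
    (hy : φ (single (0, 1) 1) = ψ (single (0, 1) 1)) : φ = ψ :=
  AddMonoidAlgebra.algHom_ext' (monoidHom_ext_int_prod hx hy) (by ext)

end LaurentLift

section LaurentMonomials

variable {F : Type*} [Semiring F]

lemma isUnit_single_one {G : Type*} [AddGroup G] (m : G) :
    IsUnit (single m 1 : AddMonoidAlgebra F G) :=
  (Group.isUnit (Multiplicative.ofAdd m)).map (AddMonoidAlgebra.of F G)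

lemma single_mul_fst_generator : (single (1, 3) 1 : AddMonoidAlgebra F (ℤ × ℤ)) *
      (1 + single (1, 0) 1 + single (-1, -3) 1) =
    single (1, 0) 1 * (1 + single (1, 0) 1) * single (0, 1) 1 ^ 3 + 1 := by
  simp [mul_add, add_mul, AddMonoidAlgebra.single_mul_single, AddMonoidAlgebra.single_pow,
    AddMonoidAlgebra.one_def, Prod.zero_eq_mk]

lemma single_mul_snd_generator : (single (0, 1) 1 : AddMonoidAlgebra F (ℤ × ℤ)) *
      (1 + single (0, 1) 1 + single (3, -1) 1) =
    single (0, 1) 1 + single (0, 1) 1 ^ 2 + single (1, 0) 1 ^ 3 := by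
  simp [mul_add, AddMonoidAlgebra.single_mul_single, AddMonoidAlgebra.single_pow]

end LaurentMonomials

section Weierstrass

open WeierstrassCurve.Affine WeierstrassCurve.Affine.CoordinateRing

variable {F : Type*} [Field F]

lemma finrank_coordinateRing_quotient_span (W : WeierstrassCurve.Affine F) {p q : F[X]}
    (hq : q ≠ 0) :
    Module.finrank F (W.CoordinateRing ⧸ Ideal.span {p • 1 + q • mk W Y}) =
      max (2 * p.natDegree) (2 * q.natDegree + 3) := by
  have hne : p • 1 + q • mk W Y ≠ 0 := fun h ↦ hq (smul_basis_eq_zero h).2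
  rw [finrank_quotient_span_eq_natDegree_norm (CoordinateRing.basis W) hne]
  apply natDegree_eq_of_degree_eq_some
  rw [degree_norm_smul_basis, degree_eq_natDegree hq]
  obtain rfl | hp := eq_or_ne p 0
  · simp
  · rw [degree_eq_natDegree hp]
    norm_cast

end Weierstrass

section CommonZero

variable {B : Type*} [CommRing B]

/-- The points with coordinates in `B` at which both generators of the code ideal vanish, with
denominators cleared so that invertibility of `x` and `y` is a consequence. -/
structure IsCommonZero (x y : B) : Prop where
  fst : x * (1 + x) * y ^ 3 + 1 = 0
  snd : y + y ^ 2 + x ^ 3 = 0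

lemma IsCommonZero.isUnit_fst {x y : B} (h : IsCommonZero x y) : IsUnit x :=
  .of_mul_eq_one (-((1 + x) * y ^ 3)) (by linear_combination -h.fst)

lemma IsCommonZero.isUnit_snd {x y : B} (h : IsCommonZero x y) : IsUnit y :=
  .of_mul_eq_one (-(x * (1 + x) * y ^ 2)) (by linear_combination -h.fst)

variable (F : Type*) [CommRing F]

/-- The ideal `(f, g)` with `f = 1 + x + x⁻¹y⁻³` and `g = 1 + y + y⁻¹x³`, over any coefficient
ring `F`. -/
abbrev codeIdeal : Ideal (AddMonoidAlgebra F (ℤ × ℤ)) :=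
  Ideal.span {1 + single (1, 0) 1 + single (-1, -3) 1, 1 + single (0, 1) 1 + single (3, -1) 1}

variable {F} [Algebra F B]

lemma codeIdeal_le_ker_iff (φ : AddMonoidAlgebra F (ℤ × ℤ) →ₐ[F] B) :
    codeIdeal F ≤ RingHom.ker φ ↔ IsCommonZero (φ (single (1, 0) 1)) (φ (single (0, 1) 1)) := by
  have hf := ((isUnit_single_one (F := F) (1, 3)).map φ).mul_right_eq_zero
    (b := φ (1 + single (1, 0) 1 + single (-1, -3) 1))
  have hg := ((isUnit_single_one (F := F) (0, 1)).map φ).mul_right_eq_zero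
    (b := φ (1 + single (0, 1) 1 + single (3, -1) 1))
  rw [← map_mul, single_mul_fst_generator] at hf
  rw [← map_mul, single_mul_snd_generator] at hg
  rw [Ideal.span_le, Set.pair_subset_iff, SetLike.mem_coe, SetLike.mem_coe, RingHom.mem_ker,
    RingHom.mem_ker, ← hf, ← hg]
  simp only [map_add, map_mul, map_pow, map_one]
  exact ⟨fun h ↦ ⟨h.1, h.2⟩, fun h ↦ ⟨h.fst, h.snd⟩⟩

lemma isCommonZero_mk : IsCommonZero
    (Ideal.Quotient.mk (codeIdeal F) (single (1, 0) 1))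
    (Ideal.Quotient.mk (codeIdeal F) (single (0, 1) 1)) :=
  (codeIdeal_le_ker_iff (Ideal.Quotient.mkₐ F (codeIdeal F))).1
    (Ideal.Quotient.mkₐ_ker F (codeIdeal F)).ge

/-- The homomorphism out of `R/(f, g)` that a common zero `(x, y)` of `f` and `g` in `B` induces:
together with `isCommonZero_mk`, the universal property of `R/(f, g)`. -/
def codeQuotientLift {x y : B} (h : IsCommonZero x y) :
    AddMonoidAlgebra F (ℤ × ℤ) ⧸ codeIdeal F →ₐ[F] B :=
  Ideal.Quotient.liftₐ (codeIdeal F) (laurentLift h.isUnit_fst.unit h.isUnit_snd.unit) <| by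
    have hker :
        codeIdeal F ≤ RingHom.ker (laurentLift (F := F) h.isUnit_fst.unit h.isUnit_snd.unit) := by
      rwa [codeIdeal_le_ker_iff, laurentLift_x, laurentLift_y]
    exact fun a ha ↦ RingHom.mem_ker.1 (hker ha)

lemma codeQuotientLift_x {x y : B} (h : IsCommonZero x y) :
    codeQuotientLift h (Ideal.Quotient.mk (codeIdeal F) (single (1, 0) 1)) = x :=
  laurentLift_x ..

lemma codeQuotientLift_y {x y : B} (h : IsCommonZero x y) :
    codeQuotientLift h (Ideal.Quotient.mk (codeIdeal F) (single (0, 1) 1)) = y :=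
  laurentLift_y ..

end CommonZero

section Curve

variable (F : Type*) [CommRing F]

/-- The affine curve `Y² + Y = X³`, which is `y g = 0` under the substitution `X = -x`, `Y = y`. -/
def codeCurve : WeierstrassCurve.Affine F := ⟨0, 0, 1, 0, 0⟩

open WeierstrassCurve.Affine.CoordinateRing

/-- The function `x` on the curve. The sign converts `y² + y + x³ = 0` to Weierstrass form and
matters only in odd characteristic. -/
def curveX : (codeCurve F).CoordinateRing := -mk (codeCurve F) (C X)

/-- The function `y` on the curve, which is the Weierstrass coordinate `Y`. -/
def curveY : (codeCurve F).CoordinateRing := mk (codeCurve F) Y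

lemma codeCurve_polynomial : (codeCurve F).polynomial = Y ^ 2 + Y - C (X ^ 3) := by
  simp [WeierstrassCurve.Affine.polynomial, codeCurve]

lemma curve_equation : curveY F + curveY F ^ 2 + curveX F ^ 3 = 0 := by
  have h : mk (codeCurve F) (Y ^ 2 + Y - C (X ^ 3)) = 0 := by
    rw [← codeCurve_polynomial]
    exact AdjoinRoot.mk_self
  simp only [map_sub, map_add, map_pow] at h
  unfold curveX curveY
  linear_combination h

/-- The generator `f`, with denominators cleared to `x y³ f`, as a function on the curve. -/
def codeFunction : (codeCurve F).CoordinateRing := curveX F * (1 + curveX F) * curveY F ^ 3 + 1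

lemma codeFunction_eq_smul_one_add_smul_Y : codeFunction F =
    (1 + X ^ 4 - X ^ 5 : F[X]) • 1 + (X ^ 5 - X ^ 4 + X ^ 2 - X : F[X]) • mk (codeCurve F) Y := by
  have h := curve_equation F
  simp only [codeFunction, smul, curveX, curveY, map_sub, map_add, map_pow, map_one] at h ⊢
  -- `y - 1` is the quotient of `y³` by `y² + y + x³`, and `X² - X` is the factor `x (1 + x)`.
  linear_combination (mk _ (C X) ^ 2 - mk _ (C X)) * (mk (codeCurve F) Y - 1) * h

variable {F} {B : Type*} [CommRing B] [Algebra F B]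

/-- The evaluation of functions on the curve at a point `(x, y)` with coordinates in `B`. -/
def codeCurveLift {x y : B} (h : y + y ^ 2 + x ^ 3 = 0) : (codeCurve F).CoordinateRing →ₐ[F] B :=
  AdjoinRoot.liftAlgHom _ (aeval (-x)) y <| by
    rw [codeCurve_polynomial]
    simp only [eval₂_sub, eval₂_add, eval₂_pow, eval₂_X, eval₂_C, RingHom.coe_coe, map_pow, aeval_X]
    linear_combination h

lemma codeCurveLift_curveX {x y : B} (h : y + y ^ 2 + x ^ 3 = 0) :
    codeCurveLift h (curveX F) = x := by
  simp [codeCurveLift, curveX]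

lemma codeCurveLift_curveY {x y : B} (h : y + y ^ 2 + x ^ 3 = 0) :
    codeCurveLift h (curveY F) = y := by
  simp [codeCurveLift, curveY]

lemma codeCurve_algHom_ext {φ ψ : (codeCurve F).CoordinateRing →ₐ[F] B}
    (hx : φ (curveX F) = ψ (curveX F)) (hy : φ (curveY F) = ψ (curveY F)) : φ = ψ := by
  refine AdjoinRoot.algHom_ext' ?_ hy
  ext
  simpa [curveX] using hx

/-- The homomorphism out of `F[W]/(codeFunction)` that a common zero `(x, y)` of `f` and `g` in `B`
induces: together with `isCommonZero_curve`, the universal property of that quotient. -/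
def codeFunctionQuotientLift {x y : B} (h : IsCommonZero x y) :
    (codeCurve F).CoordinateRing ⧸ Ideal.span {codeFunction F} →ₐ[F] B :=
  Ideal.Quotient.liftₐ _ (codeCurveLift h.snd) <| by
    have hker : Ideal.span {codeFunction F} ≤ RingHom.ker (codeCurveLift (F := F) h.snd) := by
      simpa [Ideal.span_le, codeFunction, codeCurveLift_curveX, codeCurveLift_curveY] using h.fst
    exact fun a ha ↦ RingHom.mem_ker.1 (hker ha)

lemma isCommonZero_curve : IsCommonZero
    (Ideal.Quotient.mk (Ideal.span {codeFunction F}) (curveX F))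
    (Ideal.Quotient.mk (Ideal.span {codeFunction F}) (curveY F)) where
  fst := Ideal.Quotient.mk_singleton_self (codeFunction F)
  snd := by simpa using congr(Ideal.Quotient.mk (Ideal.span {codeFunction F}) $(curve_equation F))

lemma codeFunctionQuotientLift_x {x y : B} (h : IsCommonZero x y) :
    codeFunctionQuotientLift h (Ideal.Quotient.mk (Ideal.span {codeFunction F}) (curveX F)) = x :=
  (Ideal.Quotient.lift_mk ..).trans (codeCurveLift_curveX h.snd)

lemma codeFunctionQuotientLift_y {x y : B} (h : IsCommonZero x y) :
    codeFunctionQuotientLift h (Ideal.Quotient.mk (Ideal.span {codeFunction F}) (curveY F)) = y :=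
  (Ideal.Quotient.lift_mk ..).trans (codeCurveLift_curveY h.snd)

/-- The isomorphism `R/(f, g) ≃ F[W]/(codeFunction)`: both sides represent `IsCommonZero`. -/
def codeQuotientEquiv : (AddMonoidAlgebra F (ℤ × ℤ) ⧸ codeIdeal F) ≃ₐ[F]
    (codeCurve F).CoordinateRing ⧸ Ideal.span {codeFunction F} :=
  AlgEquiv.ofAlgHom (codeQuotientLift isCommonZero_curve) (codeFunctionQuotientLift isCommonZero_mk)
    (Ideal.Quotient.algHom_ext _ <| codeCurve_algHom_ext
      (by simp [codeFunctionQuotientLift_x, codeQuotientLift_x])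
      (by simp [codeFunctionQuotientLift_y, codeQuotientLift_y]))
    (Ideal.Quotient.algHom_ext _ <| laurent_algHom_ext
      (by simp [codeFunctionQuotientLift_x, codeQuotientLift_x])
      (by simp [codeFunctionQuotientLift_y, codeQuotientLift_y]))

end Curve

theorem bb_1133bar_topological_index_general (F : Type*) [Field F] :
    Module.finrank F (AddMonoidAlgebra F (ℤ × ℤ) ⧸ codeIdeal F) = 13 := by
  have hp : (1 + X ^ 4 - X ^ 5 : F[X]).natDegree = 5 := by compute_degree!
  have hq : (X ^ 5 - X ^ 4 + X ^ 2 - X : F[X]).natDegree = 5 := by compute_degree!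
  have hq0 : (X ^ 5 - X ^ 4 + X ^ 2 - X : F[X]) ≠ 0 :=
    ne_zero_of_natDegree_gt (n := 0) (by rw [hq]; norm_num)
  rw [(codeQuotientEquiv (F := F)).toLinearEquiv.finrank_eq,
    codeFunction_eq_smul_one_add_smul_Y, finrank_coordinateRing_quotient_span _ hq0, hp, hq]
  norm_num

/-- For the BB(1̄, 1̄, 3, 3̄) code, with `f = 1 + x + x⁻¹y⁻³` and `g = 1 + y + y⁻¹x³`, the
topological index is `Q = dim_{F₂} R/(f, g) = 13`; hence `k_max = 2Q = 26`. -/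
theorem bb_1133bar_topological_index :
    Module.finrank (ZMod 2)
      (LaurentR ⧸ Ideal.span ({1 + mono 1 0 + mono (-1) (-3),
        1 + mono 0 1 + mono 3 (-1)} : Set LaurentR)) = 13 ∧
    2 * Module.finrank (ZMod 2)
      (LaurentR ⧸ Ideal.span ({1 + mono 1 0 + mono (-1) (-3),
        1 + mono 0 1 + mono 3 (-1)} : Set LaurentR)) = 26 :=
  have h := bb_1133bar_topological_index_general (ZMod 2)
  ⟨h, congrArg (2 * ·) h⟩
end
end

section
/- For the BB(1̄, 1̄, 3, 3) code, with f = 1 + x + x^{-1} y³ and g = 1 + y + y^{-1} x³ in R, the mobility sublattice is 12ℤ × 12ℤ: for all integers i, j, the monomial relation x^{i} y^{j} − 1 ∈ Ideal.span {f, g} holds if and only if 12 divides i and 12 divides j. -/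
noncomputable section

/-!
The relation `x^i y^j - 1 ∈ (f, g)` holds iff `u^i v^j = 1` for every common zero `(u, v)` of `f`
and `g` in the units of an `F₂`-algebra. Every common zero satisfies `u³ = v² + v` and
`v³ = u² + u`, which forces `u¹² = v¹² = 1`. Conversely, let `ω` be a primitive cube root of unity.
The zeros `(ω, ω)` and `(ω, ω²)` give `3 ∣ i + j` and `3 ∣ i + 2j`. The second one has
multiplicity three: it thickens to `(ω(1 + t), ω²(1 + ωt))` with `t³ = 0`, where `u⁶ = 1 + t²`,
`v⁶ = 1 + ω²t²` and `u⁶v⁶ = 1 + ωt²` all differ from `1`, so that `4 ∣ i` and `4 ∣ j`.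
-/

theorem two_dvd_of_zpow_mul_zpow_eq_one {G : Type*} [Group G] {a b : G} {i j : ℤ}
    (ha : a ^ 2 = 1) (hb : b ^ 2 = 1) (ha1 : a ≠ 1) (hb1 : b ≠ 1) (hab : a * b ≠ 1)
    (h : a ^ i * b ^ j = 1) : 2 ∣ i ∧ 2 ∣ j := by
  have zpow_even {c : G} (hc : c ^ 2 = 1) (k : ℤ) : c ^ (2 * k) = 1 := by
    rw [zpow_mul, zpow_ofNat, hc, one_zpow]
  obtain ⟨k, rfl | rfl⟩ := Int.even_or_odd' i <;> obtain ⟨l, rfl | rfl⟩ := Int.even_or_odd' j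
  · exact ⟨dvd_mul_right 2 k, dvd_mul_right 2 l⟩
  · simp [zpow_add, zpow_even ha, zpow_even hb, hb1] at h
  · simp [zpow_add, zpow_even ha, zpow_even hb, ha1] at h
  · simp [zpow_add, zpow_even ha, zpow_even hb, hab] at h

theorem pow_zpow_mul_pow_zpow_eq_one {G : Type*} [CommGroup G] {a b : G} {i j : ℤ}
    (h : a ^ i * b ^ j = 1) (n : ℕ) : (a ^ n) ^ i * (b ^ n) ^ j = 1 := by
  rw [← zpow_natCast a, ← zpow_natCast b, zpow_comm a, zpow_comm b, ← mul_zpow, h, one_zpow]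

theorem four_dvd_of_zpow_mul_zpow_eq_one {G : Type*} [CommGroup G] {a b : G} {i j : ℤ}
    (ha : a ^ 4 = 1) (hb : b ^ 4 = 1) (ha2 : a ^ 2 ≠ 1) (hb2 : b ^ 2 ≠ 1)
    (hab : a ^ 2 * b ^ 2 ≠ 1) (h : a ^ i * b ^ j = 1) : 4 ∣ i ∧ 4 ∣ j := by
  have two_dvd {k l : ℤ} (hkl : (a ^ 2) ^ k * (b ^ 2) ^ l = 1) : 2 ∣ k ∧ 2 ∣ l :=
    two_dvd_of_zpow_mul_zpow_eq_one (by rw [← pow_mul, ha]) (by rw [← pow_mul, hb]) ha2 hb2 hab hkl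
  obtain ⟨⟨k, rfl⟩, ⟨l, rfl⟩⟩ := two_dvd (pow_zpow_mul_pow_zpow_eq_one h 2)
  obtain ⟨hk, hl⟩ := two_dvd (k := k) (l := l) (by simpa only [zpow_mul, zpow_ofNat] using h)
  exact ⟨mul_dvd_mul_left 2 hk, mul_dvd_mul_left 2 hl⟩

section CubeRoot

variable {A : Type*} [CommRing A]

theorem pow_three_eq_one_of_cube_root {ω : A} (hω : 1 + ω + ω ^ 2 = 0) : ω ^ 3 = 1 := by
  linear_combination (ω - 1) * hω

variable {w : Aˣ}

theorem zpow_eq_one_iff_three_dvd_of_cube_root (h3 : (3 : A) ≠ 0) (hw : (1 + w + w ^ 2 : A) = 0)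
    (k : ℤ) : w ^ k = 1 ↔ 3 ∣ k := by
  have hw3 : w ^ 3 = 1 := Units.ext (pow_three_eq_one_of_cube_root hw)
  have hw1 : w ≠ 1 := by
    rintro rfl
    push_cast at hw
    exact h3 (by linear_combination hw)
  rw [← orderOf_dvd_iff_zpow_eq_one, orderOf_eq_prime hw3 hw1, Nat.cast_ofNat]

theorem three_dvd_of_cube_root (h3 : (3 : A) ≠ 0) (hw : (1 + w + w ^ 2 : A) = 0) {i j : ℤ}
    (hij : w ^ i * w ^ j = 1) (hij_sq : w ^ i * (w ^ 2) ^ j = 1) : 3 ∣ i ∧ 3 ∣ j := by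
  rw [← zpow_add, zpow_eq_one_iff_three_dvd_of_cube_root h3 hw] at hij
  rw [← zpow_natCast, ← zpow_mul, ← zpow_add,
    zpow_eq_one_iff_three_dvd_of_cube_root h3 hw] at hij_sq
  lia

end CubeRoot

/-- `(u, v)` is a zero, on the torus of a commutative ring, of the two polynomials
`f = 1 + x + x⁻¹y³` and `g = 1 + y + y⁻¹x³` of the BB(1̄, 1̄, 3, 3) code. -/
structure IsBB1133Zero {A : Type*} [CommRing A] (u v : Aˣ) : Prop where
  f_eq_zero : (1 + u + ↑u⁻¹ * v ^ 3 : A) = 0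
  g_eq_zero : (1 + v + ↑v⁻¹ * u ^ 3 : A) = 0

namespace IsBB1133Zero

variable {A : Type*} [CommRing A] {u v : Aˣ}

theorem symm (h : IsBB1133Zero u v) : IsBB1133Zero v u := ⟨h.g_eq_zero, h.f_eq_zero⟩

theorem of_cube_root (h : (1 + u + u ^ 2 : A) = 0) : IsBB1133Zero u u := by
  have hf : (1 + u + ↑u⁻¹ * u ^ 3 : A) = 0 := by
    linear_combination (u : A) ^ 2 * u.inv_mul + h
  exact ⟨hf, hf⟩

theorem of_cube_root_sq (h : (1 + u + u ^ 2 : A) = 0) : IsBB1133Zero u (u ^ 2) where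
  f_eq_zero := by
    push_cast
    linear_combination (u : A) ^ 5 * u.inv_mul + (1 + (u : A) ^ 2 * (u - 1)) * h
  g_eq_zero := by
    have hinv : ((u ^ 2)⁻¹ : Aˣ) * (u : A) ^ 2 = 1 := by
      rw [← Units.val_pow_eq_pow_val, Units.inv_mul]
    push_cast at hinv ⊢
    linear_combination (u : A) * hinv + h

theorem iff_pow_three_eq (h2 : (2 : A) = 0) :
    IsBB1133Zero u v ↔ (v ^ 3 : A) = u ^ 2 + u ∧ (u ^ 3 : A) = v ^ 2 + v := by
  have clear_inv (a b : Aˣ) : (1 + a + ↑a⁻¹ * b ^ 3 : A) = 0 ↔ (b ^ 3 : A) = a ^ 2 + a := by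
    have hmul : (a * (1 + a + ↑a⁻¹ * b ^ 3) : A) = b ^ 3 - (a ^ 2 + a) := by
      linear_combination (b : A) ^ 3 * a.mul_inv + ((a : A) ^ 2 + a) * h2
    rw [← a.mul_right_eq_zero, hmul, sub_eq_zero]
  exact ⟨fun h => ⟨(clear_inv u v).1 h.f_eq_zero, (clear_inv v u).1 h.g_eq_zero⟩,
    fun h => ⟨(clear_inv u v).2 h.1, (clear_inv v u).2 h.2⟩⟩

theorem pow_twelve_eq_one (h2 : (2 : A) = 0) (h : IsBB1133Zero u v) : u ^ 12 = 1 := by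
  obtain ⟨hv, hu⟩ := (iff_pow_three_eq h2).1 h
  ext
  push_cast
  generalize hx : (u : A) = x at hu hv ⊢
  generalize (v : A) = y at hu hv ⊢
  have hrel : 1 + x + y + x * y + x ^ 2 * y ^ 2 = 0 := by
    rw [← u.mul_right_eq_zero, hx]
    linear_combination y ^ 2 * hu + (y + 1) * hv + (x + x ^ 2 + x * y + x ^ 2 * y) * h2
  have hx4 : x ^ 4 = x * y ^ 2 + x * y := by linear_combination x * hu
  have hy4 : y ^ 4 = x ^ 2 * y + x * y := by linear_combination y * hv
  have hy8 : y ^ 8 = x + y + x ^ 2 * y + x ^ 2 * y ^ 2 := calc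
    y ^ 8 = x ^ 4 * y ^ 2 + x ^ 2 * y ^ 2 := by
      linear_combination (y ^ 4 + x ^ 2 * y + x * y) * hy4 + x ^ 3 * y ^ 2 * h2
    _ = x * y ^ 4 + x * y ^ 3 + x ^ 2 * y ^ 2 := by linear_combination y ^ 2 * hx4
    _ = x ^ 3 * y + x ^ 2 * y + (x ^ 3 + x ^ 2) + x ^ 2 * y ^ 2 := by
      linear_combination x * hy4 + x * hv
    _ = y ^ 3 + y + x ^ 2 + x ^ 2 * y + x ^ 2 * y ^ 2 := by
      linear_combination (y + 1) * hu + y ^ 2 * h2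
    _ = x + y + x ^ 2 * y + x ^ 2 * y ^ 2 := by linear_combination hv + x ^ 2 * h2
  calc
    x ^ 12 = (y ^ 2 + y) ^ 4 := by rw [← hu]; ring
    _ = y ^ 8 + y ^ 4 := by linear_combination (2 * y ^ 7 + 3 * y ^ 6 + 2 * y ^ 5) * h2
    _ = x + y + x * y + x ^ 2 * y ^ 2 := by linear_combination hy8 + hy4 + x ^ 2 * y * h2
    _ = 1 := by linear_combination hrel - h2

theorem of_thickened_cube_root (h2 : (2 : A) = 0) {ω t : A} (hω : 1 + ω + ω ^ 2 = 0)
    (ht : t ^ 3 = 0) (hu : (u : A) = ω * (1 + t)) (hv : (v : A) = ω ^ 2 * (1 + ω * t)) :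
    IsBB1133Zero u v := by
  have hω3 : ω ^ 3 = 1 := pow_three_eq_one_of_cube_root hω
  rw [iff_pow_three_eq h2, hu, hv]
  constructor
  · calc
      (ω ^ 2 * (1 + ω * t)) ^ 3 = (1 + ω * t) ^ 3 := by
        linear_combination (ω ^ 3 + 1) * (1 + ω * t) ^ 3 * hω3
      _ = (ω * (1 + t)) ^ 2 + ω * (1 + t) := by
        linear_combination ω ^ 3 * ht - hω + (1 + (ω - ω ^ 2) * t + ω ^ 2 * t ^ 2) * h2
  · calc
      (ω * (1 + t)) ^ 3 = (1 + t) ^ 3 := by linear_combination (1 + t) ^ 3 * hω3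
      _ = ω + t ^ 2 + ω ^ 2 + t := by
        linear_combination ht - hω + (1 + t + t ^ 2) * h2
      _ = (ω ^ 2 * (1 + ω * t)) ^ 2 + ω ^ 2 * (1 + ω * t) := by
        linear_combination (-ω - (ω ^ 3 + 1) * t ^ 2 - t) * hω3 - ω ^ 5 * t * h2

theorem four_dvd_of_thickened_cube_root (h2 : (2 : A) = 0) {ω t : A} (hω : 1 + ω + ω ^ 2 = 0)
    (ht : t ^ 3 = 0) (ht2 : t ^ 2 ≠ 0) (hu : (u : A) = ω * (1 + t))
    (hv : (v : A) = ω ^ 2 * (1 + ω * t)) {i j : ℤ} (hij : u ^ i * v ^ j = 1) : 4 ∣ i ∧ 4 ∣ j := by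
  have huv : IsBB1133Zero u v := of_thickened_cube_root h2 hω ht hu hv
  have hω3 : ω ^ 3 = 1 := pow_three_eq_one_of_cube_root hω
  have one_add_pow_six {s : A} (hs : s ^ 3 = 0) : (1 + s) ^ 6 = 1 + s ^ 2 := by
    linear_combination (20 + 15 * s + 6 * s ^ 2 + s ^ 3) * hs + (3 * s + 7 * s ^ 2) * h2
  have hu6 : (u : A) ^ 6 = 1 + t ^ 2 := by
    rw [hu, mul_pow, one_add_pow_six ht, pow_mul ω 3 2, hω3, one_pow, one_mul]
  have hv6 : (v : A) ^ 6 = 1 + ω ^ 2 * t ^ 2 := by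
    rw [hv, mul_pow, one_add_pow_six (by rw [mul_pow, ht, mul_zero]), ← pow_mul, pow_mul ω 3 4,
      hω3, one_pow, one_mul, mul_pow]
  have huv6 : (u : A) ^ 6 * (v : A) ^ 6 = 1 + ω * t ^ 2 := by
    rw [hu6, hv6]
    linear_combination t ^ 2 * hω + ω ^ 2 * t * ht - ω * t ^ 2 * h2
  have hω_unit : IsUnit ω := .of_pow_eq_one hω3 three_ne_zero
  refine four_dvd_of_zpow_mul_zpow_eq_one (a := u ^ 3) (b := v ^ 3) ?_ ?_ ?_ ?_ ?_
    (pow_zpow_mul_pow_zpow_eq_one hij 3)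
  · rw [← pow_mul, huv.pow_twelve_eq_one h2]
  · rw [← pow_mul, huv.symm.pow_twelve_eq_one h2]
  · simpa [Units.ext_iff, ← pow_mul, hu6] using ht2
  · simpa [Units.ext_iff, ← pow_mul, hv6, (hω_unit.pow 2).mul_right_eq_zero] using ht2
  · simpa [Units.ext_iff, ← pow_mul, huv6, hω_unit.mul_right_eq_zero] using ht2

end IsBB1133Zero

theorem two_eq_zero_of_algebra_zmod_two (A : Type*) [Semiring A] [Algebra (ZMod 2) A] :
    (2 : A) = 0 := by
  simpa only [map_ofNat, map_zero] using
    congrArg (algebraMap (ZMod 2) A) (show (2 : ZMod 2) = 0 from rfl)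

open Polynomial in
theorem exists_cube_root_and_pow_three_eq_zero :
    ∃ (A : Type) (_ : CommRing A) (_ : Algebra (ZMod 2) A) (ω t : A),
      1 + ω + ω ^ 2 = 0 ∧ t ^ 3 = 0 ∧ t ^ 2 ≠ 0 := by
  let K := AlgebraicClosure (ZMod 2)
  have : NeZero ((3 : ℕ) : K) := ⟨by
    rw [Ne, CharP.cast_eq_zero_iff K 2]
    decide⟩
  obtain ⟨ζ, hζ⟩ := HasEnoughRootsOfUnity.exists_primitiveRoot K 3
  have hζ_sum : 1 + ζ + ζ ^ 2 = 0 := by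
    simpa [Finset.sum_range_succ] using hζ.geom_sum_eq_zero (by decide)
  refine ⟨AdjoinRoot (X ^ 3 : K[X]), inferInstance, inferInstance, AdjoinRoot.of _ ζ,
    AdjoinRoot.root _, ?_, ?_, ?_⟩
  · simpa only [map_add, map_one, map_pow, map_zero] using congrArg (AdjoinRoot.of (X ^ 3)) hζ_sum
  · rw [← AdjoinRoot.mk_X, ← map_pow, AdjoinRoot.mk_self]
  · rw [← AdjoinRoot.mk_X, ← map_pow]
    exact AdjoinRoot.mk_ne_zero_of_natDegree_lt (monic_X_pow 3) (pow_ne_zero 2 X_ne_zero)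
      (by simp)

theorem twelve_dvd_of_forall_isBB1133Zero {i j : ℤ}
    (h : ∀ (A : Type) [CommRing A] [Algebra (ZMod 2) A] (u v : Aˣ),
      IsBB1133Zero u v → u ^ i * v ^ j = 1) : 12 ∣ i ∧ 12 ∣ j := by
  obtain ⟨A, _, _, ω, t, hω, ht, ht2⟩ := exists_cube_root_and_pow_three_eq_zero
  have : Nontrivial A := ⟨t ^ 2, 0, ht2⟩
  have h2 : (2 : A) = 0 := two_eq_zero_of_algebra_zmod_two A
  have ht_nil : IsNilpotent t := ⟨3, ht⟩
  have hωt_nil : IsNilpotent (ω * t) := (Commute.all ω t).isNilpotent_mul_left ht_nil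
  obtain ⟨w, rfl⟩ : IsUnit ω := .of_mul_eq_one (-(1 + ω)) (by linear_combination -hω)
  obtain ⟨u, hu⟩ := w.isUnit.mul ht_nil.isUnit_one_add
  obtain ⟨v, hv⟩ := (w.isUnit.pow 2).mul hωt_nil.isUnit_one_add
  have h3 : (3 : A) ≠ 0 := fun h3 => one_ne_zero (α := A) (by linear_combination h3 - h2)
  have three_dvd : 3 ∣ i ∧ 3 ∣ j :=
    three_dvd_of_cube_root h3 hω (h A w w (.of_cube_root hω)) (h A w (w ^ 2) (.of_cube_root_sq hω))
  have four_dvd : 4 ∣ i ∧ 4 ∣ j :=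
    IsBB1133Zero.four_dvd_of_thickened_cube_root h2 hω ht ht2 hu hv
      (h A u v (.of_thickened_cube_root h2 hω ht hu hv))
  lia

section Evaluation

/-- The variable `x` as a unit of the Laurent polynomial ring. -/
def xUnit : LaurentRˣ :=
  (AddMonoidAlgebra.of (ZMod 2) (ℤ × ℤ)).toHomUnits (Multiplicative.ofAdd (1, 0))

/-- The variable `y` as a unit of the Laurent polynomial ring. -/
def yUnit : LaurentRˣ :=
  (AddMonoidAlgebra.of (ZMod 2) (ℤ × ℤ)).toHomUnits (Multiplicative.ofAdd (0, 1))

theorem coe_xUnit : (xUnit : LaurentR) = mono 1 0 := rfl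

theorem coe_yUnit : (yUnit : LaurentR) = mono 0 1 := rfl

theorem coe_xUnit_zpow_mul_yUnit_zpow (i j : ℤ) :
    (↑(xUnit ^ i * yUnit ^ j) : LaurentR) = mono i j := by
  have hij : Multiplicative.ofAdd ((1, 0) : ℤ × ℤ) ^ i * Multiplicative.ofAdd ((0, 1) : ℤ × ℤ) ^ j =
      Multiplicative.ofAdd (i, j) := by
    simp [← ofAdd_zsmul, ← ofAdd_add]
  simp only [xUnit, yUnit, ← map_zpow, ← map_mul, hij]
  rfl

/-- The ideal `(f, g)` of the BB(1̄, 1̄, 3, 3) code. -/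
abbrev bb1133Ideal : Ideal LaurentR :=
  Ideal.span {1 + mono 1 0 + mono (-1) 3, 1 + mono 0 1 + mono 3 (-1)}

variable {A : Type*} [CommRing A] {u v : Aˣ}

section RingHom

variable {φ : LaurentR →+* A}

theorem map_mono_eq (hu : φ xUnit = u) (hv : φ yUnit = v) (i j : ℤ) :
    φ (mono i j) = ↑(u ^ i * v ^ j) := by
  obtain rfl : Units.map φ xUnit = u := Units.ext hu
  obtain rfl : Units.map φ yUnit = v := Units.ext hv
  rw [← coe_xUnit_zpow_mul_yUnit_zpow, ← map_zpow, ← map_zpow, ← map_mul, Units.coe_map,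
    MonoidHom.coe_coe]

theorem mono_sub_one_mem_ker_iff (hu : φ xUnit = u) (hv : φ yUnit = v) (i j : ℤ) :
    mono i j - 1 ∈ RingHom.ker φ ↔ u ^ i * v ^ j = 1 := by
  rw [RingHom.mem_ker, map_sub, map_one, map_mono_eq hu hv, sub_eq_zero, Units.val_eq_one]

theorem bb1133Ideal_le_ker_iff (hu : φ xUnit = u) (hv : φ yUnit = v) :
    bb1133Ideal ≤ RingHom.ker φ ↔ IsBB1133Zero u v := by
  have hf : φ (1 + mono 1 0 + mono (-1) 3) = 1 + u + ↑u⁻¹ * v ^ 3 := by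
    simp [map_mono_eq hu hv, zpow_ofNat]
  have hg : φ (1 + mono 0 1 + mono 3 (-1)) = 1 + v + ↑v⁻¹ * u ^ 3 := by
    simp [map_mono_eq hu hv, zpow_ofNat, mul_comm]
  rw [Ideal.span_le, Set.pair_subset_iff, SetLike.mem_coe, SetLike.mem_coe, RingHom.mem_ker,
    RingHom.mem_ker, hf, hg]
  exact ⟨fun h => ⟨h.1, h.2⟩, fun h => ⟨h.f_eq_zero, h.g_eq_zero⟩⟩

end RingHom

/-- The evaluation homomorphism `x ↦ u`, `y ↦ v`. -/
def evalUnits [Algebra (ZMod 2) A] (u v : Aˣ) : LaurentR →ₐ[ZMod 2] A :=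
  AddMonoidAlgebra.lift (ZMod 2) A (ℤ × ℤ)
    { toFun p := ↑(u ^ p.toAdd.1 * v ^ p.toAdd.2)
      map_one' := by simp
      map_mul' p q := by
        rw [← Units.val_mul, toAdd_mul, Prod.fst_add, Prod.snd_add, zpow_add, zpow_add,
          mul_mul_mul_comm] }

theorem evalUnits_mono [Algebra (ZMod 2) A] (u v : Aˣ) (i j : ℤ) :
    evalUnits u v (mono i j) = ↑(u ^ i * v ^ j) := by
  simp [evalUnits, mono]

end Evaluation

theorem mono_sub_one_mem_bb1133Ideal_iff (i j : ℤ) :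
    mono i j - 1 ∈ bb1133Ideal ↔
      ∀ (A : Type) [CommRing A] [Algebra (ZMod 2) A] (u v : Aˣ),
        IsBB1133Zero u v → u ^ i * v ^ j = 1 := by
  constructor
  · intro hmem A _ _ u v huv
    let φ : LaurentR →+* A := evalUnits u v
    have hu : φ xUnit = u := by simp [φ, coe_xUnit, evalUnits_mono]
    have hv : φ yUnit = v := by simp [φ, coe_yUnit, evalUnits_mono]
    exact (mono_sub_one_mem_ker_iff hu hv i j).1 ((bb1133Ideal_le_ker_iff hu hv).2 huv hmem)
  · intro h
    let π := Ideal.Quotient.mk bb1133Ideal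
    have hker : RingHom.ker π = bb1133Ideal := Ideal.mk_ker
    let u : (LaurentR ⧸ bb1133Ideal)ˣ := Units.map π xUnit
    let v : (LaurentR ⧸ bb1133Ideal)ˣ := Units.map π yUnit
    have hu : π xUnit = u := rfl
    have hv : π yUnit = v := rfl
    rw [← hker, mono_sub_one_mem_ker_iff hu hv]
    exact h _ u v ((bb1133Ideal_le_ker_iff hu hv).1 hker.ge)

/-- For the BB(1̄, 1̄, 3, 3) code, with `f = 1 + x + x⁻¹y³` and `g = 1 + y + y⁻¹x³`, the
mobility sublattice is `12ℤ × 12ℤ`: for all integers `i, j`,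
`x^i y^j − 1 ∈ (f, g)` if and only if `12 ∣ i` and `12 ∣ j`. -/
theorem bb_1133_mobility_sublattice (i j : ℤ) :
    mono i j - 1 ∈ Ideal.span ({1 + mono 1 0 + mono (-1) 3,
      1 + mono 0 1 + mono 3 (-1)} : Set LaurentR) ↔ (12 : ℤ) ∣ i ∧ (12 : ℤ) ∣ j := by
  rw [mono_sub_one_mem_bb1133Ideal_iff]
  constructor
  · exact twelve_dvd_of_forall_isBB1133Zero
  · rintro ⟨⟨a, rfl⟩, ⟨b, rfl⟩⟩ A _ _ u v huv
    have h2 : (2 : A) = 0 := two_eq_zero_of_algebra_zmod_two A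
    rw [zpow_mul, zpow_mul, zpow_ofNat, zpow_ofNat, huv.pow_twelve_eq_one h2,
      huv.symm.pow_twelve_eq_one h2, one_zpow, one_zpow, one_mul]
end
end
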